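/- Fix d ≥ 3, positive definite Σ with unit diagonal and smallest eigenvalue σ_*² > 0, φ > 0, ε ∈ (0,1], an integer v ≥ 1, and K > 0; set η := K/√(log d). For a rectangle A define ρ^{A,φ,ε,Σ}(w) := E[m^{A,φ}(w + εZ)] with Z ∼ N(0,Σ) and m^{A,φ} the φ-Lipschitz smoothed indicator of A. Then sup over rectangles A and w ∈ ℝ^d of Σ_{j_1,…,j_v=1}^d sup_{‖y‖_∞ ≤ ε σ_* η} |∂_{j_1…j_v} ρ^{A,φ,ε,Σ}(w + y)| is at most C φ (log d)^{(v−1)/2} / (ε σ_*)^{v−1}, where C depends only on v and K. -/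

import Mathlib

open MeasureTheory ProbabilityTheory

/-- The piecewise-linear smoothing function g^φ. -/
noncomputable def gphi (φ t : ℝ) : ℝ :=
  if t ≤ 0 then 1 else if t < 1 / φ then 1 - φ * t else 0

/-- The φ-Lipschitz smoothed indicator of the rectangle ∏ (a_j, b_j]. -/
noncomputable def mrect (d : ℕ) (a b : Fin d → ℝ) (φ : ℝ) (w : Fin d → ℝ) : ℝ :=
  gphi φ (⨆ j, max (w j - b j) (a j - w j))

/-- ρ^{A,φ,ε,Σ}(w) = E[m^{A,φ}(w + εZ)], Z ∼ N(0,Σ) with law γ. -/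
noncomputable def rhoFn (d : ℕ) (a b : Fin d → ℝ) (φ ε : ℝ)
    (γ : Measure (Fin d → ℝ)) (w : Fin d → ℝ) : ℝ :=
  ∫ z, mrect d a b φ (w + ε • z) ∂γ

/-!
The covariance splits as `Σ = (Σ - σ_*² I) + σ_*² I`, so `γ` is a convolution `ν ∗ N(0, σ_*² I)`;
since moreover `g^φ(M) = φ · |{t ∈ [0, 1/φ] : M ≤ t}|`, the function `ρ` is `φ` times a mixture,
over the inflated and shifted rectangles, of products of one-dimensional factors
`Φ(v_j - x_j) - Φ(u_j - x_j)`. For a product the sum over all multi-indices is controlled one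
coordinate at a time, but a Gaussian tail is not stable under shifts by `η = K / L`, `L = √(log d)`:
its hazard rate is unbounded. Mixing `Φ` with a logistic distribution of weight `e^{-L²} = 1/d`
costs a factor `(1 - 1/d)^{-d} = O(1)` in the product and makes the hazard rate `O(L)`. With the
mixture in place of `Φ`, each derivative beyond the first costs a factor `O(L)`, and what remains
is a flux through the faces of the rectangle which is dominated by the derivative of the product of
the factors in the inflation level `t`. Its integral over `t` is therefore at most the total
increment of a number in `[0, 1]`, up to the scale `ε σ_*`.
-/

open scoped ContDiff

section Derivatives

section UnderIntegral

variable {α E G : Type*} [NormedAddCommGroup E] [NormedSpace ℝ E]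
  [NormedAddCommGroup G] [NormedSpace ℝ G]

theorem contDiff_iteratedFDeriv_uncurry [NormedAddCommGroup α] [NormedSpace ℝ α] {F : α → E → G}
    (hF : ContDiff ℝ ∞ fun p : α × E => F p.1 p.2) (k : ℕ) :
    ContDiff ℝ ∞ fun p : α × E => iteratedFDeriv ℝ k (F p.1) p.2 := by
  induction k with
  | zero =>
    simp only [iteratedFDeriv_zero_eq_comp]
    exact (LinearIsometryEquiv.contDiff _).comp hF
  | succ k ih =>
    simp only [iteratedFDeriv_succ_eq_comp_left, Function.comp_apply]
    refine (LinearIsometryEquiv.contDiff (𝕜 := ℝ) (E := E →L[ℝ] E [×k]→L[ℝ] G)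
      (F := E [×(k + 1)]→L[ℝ] G)
      (continuousMultilinearCurryLeftEquiv ℝ (fun _ : Fin (k + 1) => E) G).symm).comp
      (f := fun p : α × E => fderiv ℝ (iteratedFDeriv ℝ k (F p.1)) p.2) ?_
    exact ContDiff.fderiv (ih.comp ((contDiff_fst.comp contDiff_fst).prodMk contDiff_snd))
      contDiff_snd (by simp)

theorem hasFTaylorSeriesUpTo_integral [MeasurableSpace α] {μ : Measure α} {F : α → E → G} {n : ℕ}
    {bound : ℕ → α → ℝ} (hF : ∀ᵐ a ∂μ, ContDiff ℝ n (F a))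
    (hF_meas : ∀ k ≤ n, ∀ x, AEStronglyMeasurable (fun a => iteratedFDeriv ℝ k (F a) x) μ)
    (h_bound : ∀ k ≤ n, ∀ᵐ a ∂μ, ∀ x, ‖iteratedFDeriv ℝ k (F a) x‖ ≤ bound k a)
    (bound_integrable : ∀ k ≤ n, Integrable (bound k) μ) :
    HasFTaylorSeriesUpTo n (fun x => ∫ a, F a x ∂μ)
      fun x k => ∫ a, iteratedFDeriv ℝ k (F a) x ∂μ where
  zero_eq x := ((continuousMultilinearCurryFin0 ℝ E G).toContinuousLinearEquiv.integral_comp_comm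
    fun a => iteratedFDeriv ℝ 0 (F a) x).symm
  fderiv k hk x := by
    have succ_le : k + 1 ≤ n := by exact_mod_cast hk
    have k_le : k ≤ n := k.le_succ.trans succ_le
    let e := continuousMultilinearCurryLeftEquiv ℝ (fun _ : Fin (k + 1) => E) G
    have fderiv_eq (a : α) (x : E) :
        fderiv ℝ (iteratedFDeriv ℝ k (F a)) x = e (iteratedFDeriv ℝ (k + 1) (F a) x) := by
      simp [e, iteratedFDeriv_succ_eq_comp_left]
    refine (hasFDerivAt_integral_of_dominated_of_fderiv_le (𝕜 := ℝ) (bound := bound (k + 1))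
      (F' := fun x a => fderiv ℝ (iteratedFDeriv ℝ k (F a)) x) Filter.univ_mem
      (.of_forall (hF_meas k k_le)) ?_ ?_ ?_ (bound_integrable _ succ_le) ?_).congr_fderiv ?_
    · exact (bound_integrable k k_le).mono' (hF_meas k k_le x)
        ((h_bound k k_le).mono fun a h => h x)
    · simp only [fderiv_eq]
      exact e.continuous.comp_aestronglyMeasurable (hF_meas (k + 1) succ_le x)
    · filter_upwards [h_bound (k + 1) succ_le] with a h y _
      exact norm_fderiv_iteratedFDeriv.trans_le (h y)
    · filter_upwards [hF] with a h y _
      exact (h.differentiable_iteratedFDeriv hk y).hasFDerivAt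
    · simp only [fderiv_eq]
      exact ContinuousLinearEquiv.integral_comp_comm (𝕜 := ℝ) (E := E [×(k + 1)]→L[ℝ] G)
        (F := E →L[ℝ] E [×k]→L[ℝ] G) e.toContinuousLinearEquiv
        fun a => iteratedFDeriv ℝ (k + 1) (F a) x
  cont k hk := by
    have k_le : k ≤ n := by exact_mod_cast hk
    exact continuous_of_dominated (hF_meas k k_le)
      (fun x => (h_bound k k_le).mono fun a h => h x) (bound_integrable k k_le)
      (hF.mono fun a h => h.continuous_iteratedFDeriv hk)

end UnderIntegral

variable {𝕜 ι κ : Type*} [Fintype ι] [Fintype κ] [DecidableEq ι]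

theorem opNorm_le_sum_norm_apply_single [NontriviallyNormedField 𝕜] {G : Type*}
    [NormedAddCommGroup G] [NormedSpace 𝕜 G] [DecidableEq κ]
    (f : ContinuousMultilinearMap 𝕜 (fun _ : κ => ι → 𝕜) G) :
    ‖f‖ ≤ ∑ J : κ → ι, ‖f fun i => Pi.single (J i) 1‖ := by
  refine f.opNorm_le_bound (Finset.sum_nonneg fun _ _ => norm_nonneg _) fun m => ?_
  have expand : f m = ∑ J : κ → ι, (∏ i, m i (J i)) • f fun i => Pi.single (J i) 1 := by
    conv_lhs => rw [show m = fun i => ∑ j, m i j • Pi.single j (1 : 𝕜) from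
      funext fun i => pi_eq_sum_univ' (m i)]
    rw [f.map_sum]
    exact Finset.sum_congr rfl fun J _ => f.map_smul_univ _ _
  rw [expand, Finset.sum_mul]
  refine (norm_sum_le _ _).trans (Finset.sum_le_sum fun J _ => ?_)
  rw [norm_smul, norm_prod, mul_comm]
  gcongr with i
  exact norm_le_pi_norm (m i) (J i)

/-- The number of occurrences of `j` in the multi-index `J`, that is, the order in the `j`-th
variable of the mixed partial derivative `∂_J`. -/
def indexCount (J : κ → ι) (j : ι) : ℕ := Finset.card {i | J i = j}

omit [Fintype ι] in
theorem indexCount_le (J : κ → ι) (j : ι) : indexCount J j ≤ Fintype.card κ :=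
  Finset.card_le_univ _

theorem sum_indexCount (J : κ → ι) : ∑ j, indexCount J j = Fintype.card κ :=
  (Finset.card_eq_sum_card_fiberwise fun _ _ => Finset.mem_univ _).symm

omit [Fintype ι] in
theorem indexCount_cons {n : ℕ} (i : ι) (J : Fin n → ι) (j : ι) :
    indexCount (Fin.cons i J : Fin (n + 1) → ι) j = indexCount J j + if i = j then 1 else 0 := by
  simp only [indexCount, Finset.card_filter, Fin.sum_univ_succ, Fin.cons_zero, Fin.cons_succ]
  rw [add_comm]

theorem iteratedFDeriv_prod_apply_single [NontriviallyNormedField 𝕜] {n : ℕ} {u : ι → 𝕜 → 𝕜}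
    (hu : ∀ j, ContDiff 𝕜 n (u j)) (J : Fin n → ι) (x : ι → 𝕜) :
    (iteratedFDeriv 𝕜 n (fun x : ι → 𝕜 => ∏ j, u j (x j)) x fun i => Pi.single (J i) 1) =
      ∏ j, iteratedDeriv (indexCount J j) (u j) (x j) := by
  induction n generalizing x with
  | zero => simp [indexCount]
  | succ n ih =>
    obtain ⟨i, J, rfl⟩ : ∃ i J', J = Fin.cons i J' := ⟨J 0, Fin.tail J, (Fin.cons_self_tail J).symm⟩
    have lt_succ : (n : WithTop ℕ∞) < (n + 1 : ℕ) := by exact_mod_cast n.lt_succ_self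
    have differentiable : DifferentiableAt 𝕜
        (iteratedFDeriv 𝕜 n fun x : ι → 𝕜 => ∏ j, u j (x j)) x :=
      (contDiff_prod fun j _ => (hu j).comp (contDiff_apply 𝕜 𝕜 j)).differentiable_iteratedFDeriv
        lt_succ x
    have hasFDerivAt_factor (j : ι) :
        HasFDerivAt (fun y : ι → 𝕜 => iteratedDeriv (indexCount J j) (u j) (y j))
          (iteratedDeriv (indexCount J j + 1) (u j) (x j) •
            ContinuousLinearMap.proj (R := 𝕜) (φ := fun _ : ι => 𝕜) j) x := by
      rw [iteratedDeriv_succ]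
      have order_lt : (indexCount J j : WithTop ℕ∞) < (n + 1 : ℕ) := by
        have := indexCount_le J j
        rw [Fintype.card_fin] at this
        exact_mod_cast Nat.lt_succ_of_le this
      exact ((hu j).differentiable_iteratedDeriv _ order_lt (x j)).hasDerivAt.comp_hasFDerivAt x
        (hasFDerivAt_apply (𝕜 := 𝕜) (F' := fun _ : ι => 𝕜) j x)
    rw [differentiable.iteratedFDeriv_succ_apply_left']
    simp only [Fin.cons_zero, Fin.tail_def, Fin.cons_succ, ih fun j => (hu j).of_le lt_succ.le]
    rw [(HasFDerivAt.finsetProd fun j _ => hasFDerivAt_factor j).fderiv, sum_apply,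
      Finset.sum_eq_single i (fun j _ hj => by simp [hj]) (by simp),
      ← Finset.mul_prod_erase Finset.univ _ (Finset.mem_univ i), mul_comm]
    simp only [smul_apply, ContinuousLinearMap.proj_apply, Pi.single_eq_same, smul_eq_mul, mul_one,
      indexCount_cons, if_true]
    congr 1
    refine Finset.prod_congr rfl fun j hj => ?_
    rw [if_neg (Finset.ne_of_mem_erase hj).symm, add_zero]

end Derivatives

section Combinatorics

variable {ι κ : Type*} [Fintype ι] [Fintype κ] [DecidableEq ι]

omit [Fintype ι] in
theorem indexCount_eq_zero {J : κ → ι} {j : ι} : indexCount J j = 0 ↔ ∀ i, J i ≠ j := by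
  simp [indexCount, Finset.filter_eq_empty_iff]

theorem card_filter_support_eq_le [DecidableEq κ] (s T : Finset ι) :
    Finset.card {J : κ → ι | {k ∈ s | indexCount J k ≠ 0} = T} ≤
      (sᶜ.card + Fintype.card κ) ^ Fintype.card κ := by
  rcases Finset.eq_empty_or_nonempty {J : κ → ι | {k ∈ s | indexCount J k ≠ 0} = T} with
    h_empty | ⟨J₀, hJ₀⟩
  · simp [h_empty]
  have card_le : T.card ≤ Fintype.card κ := by
    have subset_image : T ⊆ Finset.univ.image J₀ := fun k hk => by
      rw [← (Finset.mem_filter.1 hJ₀).2, Finset.mem_filter, Ne, indexCount_eq_zero] at hk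
      simpa using hk.2
    exact (Finset.card_le_card subset_image).trans Finset.card_image_le
  have subset_piFinset : ({J : κ → ι | {k ∈ s | indexCount J k ≠ 0} = T} : Finset (κ → ι)) ⊆
      Fintype.piFinset fun _ => sᶜ ∪ T := fun J hJ => by
    refine Fintype.mem_piFinset.2 fun i => ?_
    have count_ne_zero : indexCount J (J i) ≠ 0 := fun h => indexCount_eq_zero.1 h i rfl
    rw [← (Finset.mem_filter.1 hJ).2, Finset.mem_union, Finset.mem_compl, Finset.mem_filter]
    tauto
  calc _ ≤ (sᶜ ∪ T).card ^ Fintype.card κ := by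
        simpa using Finset.card_le_card subset_piFinset
    _ ≤ _ := Nat.pow_le_pow_left ((Finset.card_union_le _ _).trans (by gcongr)) _

theorem sum_prod_ite_indexCount_le [DecidableEq κ] {X Y : ι → ℝ} (s : Finset ι)
    (hX : ∀ k ∈ s, 0 ≤ X k) (hY : ∀ k ∈ s, 0 ≤ Y k) :
    ∑ J : κ → ι, ∏ k ∈ s, (if indexCount J k = 0 then Y k else X k) ≤
      (sᶜ.card + Fintype.card κ) ^ Fintype.card κ * ∏ k ∈ s, (X k + Y k) := by
  let support (J : κ → ι) : Finset ι := {k ∈ s | indexCount J k ≠ 0}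
  let term (T : Finset ι) : ℝ := (∏ k ∈ T, X k) * ∏ k ∈ s \ T, Y k
  have prod_eq_term (J : κ → ι) :
      ∏ k ∈ s, (if indexCount J k = 0 then Y k else X k) = term (support J) := by
    simp only [Finset.prod_ite, term, support, ← Finset.filter_not, not_not, mul_comm, Ne]
  have support_mem (J : κ → ι) (_ : J ∈ Finset.univ) : support J ∈ s.powerset :=
    Finset.mem_powerset.2 (Finset.filter_subset _ _)
  simp only [prod_eq_term]
  rw [Finset.prod_add, Finset.mul_sum, ← Finset.sum_fiberwise_of_maps_to support_mem]
  refine Finset.sum_le_sum fun T hT => ?_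
  have term_nonneg : 0 ≤ term T :=
    mul_nonneg (Finset.prod_nonneg fun k hk => hX k (Finset.mem_powerset.1 hT hk))
      (Finset.prod_nonneg fun k hk => hY k (Finset.mem_sdiff.1 hk).1)
  calc ∑ J with support J = T, term (support J) = ∑ J with support J = T, term T :=
        Finset.sum_congr rfl fun J hJ => by rw [(Finset.mem_filter.1 hJ).2]
    _ = Finset.card {J | support J = T} * term T := by rw [Finset.sum_const, nsmul_eq_mul]
    _ ≤ _ := by
      gcongr
      exact_mod_cast card_filter_support_eq_le s T

/-- The factor contributed by a coordinate in which a mixed partial derivative has order `m`: the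
value `p` if it does not differentiate there, and otherwise the bound `f` on the first derivative,
with a factor `L` for each further derivative. -/
def derivFactor (L p f : ℝ) : ℕ → ℝ
  | 0 => p
  | m + 1 => L ^ m * f

theorem derivFactor_nonneg {L p f : ℝ} (hL : 0 ≤ L) (hp : 0 ≤ p) (hf : 0 ≤ f) :
    ∀ m, 0 ≤ derivFactor L p f m
  | 0 => hp
  | _ + 1 => mul_nonneg (pow_nonneg hL _) hf

theorem derivFactor_le {L A p f q : ℝ} (hL : 0 ≤ L) (hLA : L ≤ A) (hf : 0 ≤ f) (hfq : f ≤ A * q)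
    (m : ℕ) : derivFactor L p f m ≤ A ^ m * if m = 0 then p else q := by
  rcases m with _ | m
  · rw [derivFactor, pow_zero, if_pos rfl, one_mul]
  · rw [derivFactor, if_neg m.succ_ne_zero, pow_succ, mul_assoc]
    have hA : 0 ≤ A := hL.trans hLA
    gcongr

variable {P f : ι → ℝ} {L A : ℝ} {n : ℕ}

theorem prod_derivFactor_cons_le (hL : 0 ≤ L) (hLA : L ≤ A) (hP₀ : ∀ j, 0 ≤ P j)
    (hf₀ : ∀ j, 0 ≤ f j) (hf : ∀ j, f j ≤ A * ((1 - P j) / 2)) (i : ι) (J : Fin n → ι) :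
    ∏ j, derivFactor L (P j) (f j) (indexCount (Fin.cons i J : Fin (n + 1) → ι) j) ≤
      f i * (A ^ n * ∏ k ∈ Finset.univ.erase i,
        if indexCount J k = 0 then P k else (1 - P k) / 2) := by
  have hA : 0 ≤ A := hL.trans hLA
  have factor_nonneg (k : ι) := derivFactor_nonneg hL (hP₀ k) (hf₀ k) (indexCount J k)
  have prod_erase : ∏ k ∈ Finset.univ.erase i,
      derivFactor L (P k) (f k) (indexCount (Fin.cons i J : Fin (n + 1) → ι) k) =
      ∏ k ∈ Finset.univ.erase i, derivFactor L (P k) (f k) (indexCount J k) :=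
    Finset.prod_congr rfl fun k hk => by
      rw [indexCount_cons, if_neg (Finset.ne_of_mem_erase hk).symm, add_zero]
  rw [← Finset.mul_prod_erase _ _ (Finset.mem_univ i), prod_erase, indexCount_cons, if_pos rfl,
    derivFactor]
  calc L ^ indexCount J i * f i * _
      ≤ A ^ indexCount J i * f i * ∏ k ∈ Finset.univ.erase i,
          (A ^ indexCount J k * if indexCount J k = 0 then P k else (1 - P k) / 2) := by
        gcongr
        exacts [Finset.prod_nonneg fun k _ => factor_nonneg k,
          mul_nonneg (pow_nonneg hA _) (hf₀ i), hf₀ i, fun k _ => factor_nonneg k,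
          derivFactor_le hL hLA (hf₀ _) (hf _) _]
    _ = f i * (A ^ (∑ j, indexCount J j) * ∏ k ∈ Finset.univ.erase i,
          if indexCount J k = 0 then P k else (1 - P k) / 2) := by
        rw [Finset.prod_mul_distrib, Finset.prod_pow_eq_pow_sum,
          ← Finset.add_sum_erase _ _ (Finset.mem_univ i), pow_add]
        ring
    _ = _ := by rw [sum_indexCount, Fintype.card_fin]

theorem sum_prod_derivFactor_le (hL : 0 ≤ L) (hLA : L ≤ A) (hP₀ : ∀ j, 0 ≤ P j)
    (hP₁ : ∀ j, P j ≤ 1) (hf₀ : ∀ j, 0 ≤ f j) (hf : ∀ j, f j ≤ A * ((1 - P j) / 2)) :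
    ∑ J : Fin (n + 1) → ι, ∏ j, derivFactor L (P j) (f j) (indexCount J j) ≤
      A ^ n * (n + 1) ^ n * ∑ i, f i * ∏ k ∈ Finset.univ.erase i, (1 + P k) / 2 := by
  have hA : 0 ≤ A := hL.trans hLA
  have midpoint (k : ι) : (1 - P k) / 2 + P k = (1 + P k) / 2 := by ring
  have card_compl (i : ι) : (Finset.univ.erase i)ᶜ.card = 1 := by
    simp only [Finset.compl_erase, Finset.compl_univ, insert_empty_eq, Finset.card_singleton]
  calc ∑ J : Fin (n + 1) → ι, ∏ j, derivFactor L (P j) (f j) (indexCount J j)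
      = ∑ i, ∑ J : Fin n → ι,
          ∏ j, derivFactor L (P j) (f j) (indexCount (Fin.cons i J : Fin (n + 1) → ι) j) := by
        rw [← (Fin.consEquiv fun _ => ι).sum_comp, Fintype.sum_prod_type]
        rfl
    _ ≤ ∑ i, ∑ J : Fin n → ι, f i * (A ^ n * ∏ k ∈ Finset.univ.erase i,
          if indexCount J k = 0 then P k else (1 - P k) / 2) := by
        gcongr with i _ J
        exact prod_derivFactor_cons_le hL hLA hP₀ hf₀ hf i J
    _ ≤ ∑ i, f i * (A ^ n * ((n + 1) ^ n * ∏ k ∈ Finset.univ.erase i, (1 + P k) / 2)) := by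
        simp only [← Finset.mul_sum]
        gcongr with i
        · exact hf₀ i
        · refine (sum_prod_ite_indexCount_le (Finset.univ.erase i)
            (fun k _ => by linarith [hP₁ k]) fun k _ => hP₀ k).trans_eq ?_
          rw [card_compl, Fintype.card_fin]
          simp only [midpoint, Nat.cast_one, add_comm]
    _ = _ := by
        rw [Finset.mul_sum]
        exact Finset.sum_congr rfl fun i _ => by ring

end Combinatorics

section NormalCDF

variable {v : NNReal}

theorem hasDerivAt_cdf_gaussianReal (μ : ℝ) (hv : v ≠ 0) (x : ℝ) :
    HasDerivAt (cdf (gaussianReal μ v)) (gaussianPDFReal μ v x) x := by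
  have integrable : Integrable (gaussianPDFReal μ v) := integrable_gaussianPDFReal μ v
  have continuous : Continuous (gaussianPDFReal μ v) := by unfold gaussianPDFReal; fun_prop
  have cdf_eq (y : ℝ) : cdf (gaussianReal μ v) y = ∫ t in Set.Iic y, gaussianPDFReal μ v t := by
    rw [cdf_eq_real, measureReal_def, gaussianReal_apply_eq_integral μ hv, ENNReal.toReal_ofReal]
    exact setIntegral_nonneg measurableSet_Iic fun t _ => gaussianPDFReal_nonneg μ v t
  have cdf_eq_add : (cdf (gaussianReal μ v) : ℝ → ℝ) =
      fun y => cdf (gaussianReal μ v) x + ∫ t in x..y, gaussianPDFReal μ v t := by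
    funext y
    rw [cdf_eq, cdf_eq, ← intervalIntegral.integral_Iic_sub_Iic integrable.integrableOn
      integrable.integrableOn]
    ring
  rw [cdf_eq_add]
  exact (intervalIntegral.integral_hasDerivAt_right (continuous.intervalIntegrable _ _)
    (continuous.stronglyMeasurableAtFilter _ _) continuous.continuousAt).const_add _

theorem contDiff_cdf_gaussianReal (μ : ℝ) (hv : v ≠ 0) : ContDiff ℝ ∞ (cdf (gaussianReal μ v)) := by
  refine contDiff_infty_iff_deriv.2
    ⟨fun x => (hasDerivAt_cdf_gaussianReal μ hv x).differentiableAt, ?_⟩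
  rw [funext fun x => (hasDerivAt_cdf_gaussianReal μ hv x).deriv]
  unfold gaussianPDFReal
  fun_prop

theorem cdf_gaussianReal_neg (hv : v ≠ 0) (x : ℝ) :
    cdf (gaussianReal 0 v) (-x) = 1 - cdf (gaussianReal 0 v) x := by
  have := nullSingletonClass_gaussianReal (μ := 0) hv
  rw [cdf_eq_real, cdf_eq_real, ← probReal_compl_eq_one_sub measurableSet_Iic, Set.compl_Iic,
    measureReal_congr Ioi_ae_eq_Ici]
  nth_rw 1 [← neg_zero, ← gaussianReal_map_neg]
  rw [map_measureReal_apply measurable_neg measurableSet_Iic]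
  simp

theorem measureReal_gaussianReal_Icc (hv : v ≠ 0) {a b : ℝ} (h : a ≤ b) :
    (gaussianReal 0 v).real (Set.Icc a b) =
      cdf (gaussianReal 0 v) b + cdf (gaussianReal 0 v) (-a) - 1 := by
  have := nullSingletonClass_gaussianReal (μ := 0) hv
  rw [← measureReal_congr Ioc_ae_eq_Icc, ← Set.Iic_sdiff_Iic,
    measureReal_sdiff (Set.Iic_subset_Iic.2 h) measurableSet_Iic, cdf_gaussianReal_neg hv]
  simp only [cdf_eq_real]
  ring

theorem gaussianPDFReal_zero_one (x : ℝ) :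
    gaussianPDFReal 0 1 x = (√(2 * Real.pi))⁻¹ * Real.exp (-(x ^ 2 / 2)) := by
  simp [gaussianPDFReal, neg_div]

theorem gaussianPDFReal_zero_one_le (x : ℝ) : gaussianPDFReal 0 1 x ≤ Real.exp (-(x ^ 2 / 2)) := by
  rw [gaussianPDFReal_zero_one]
  refine mul_le_of_le_one_left (Real.exp_pos _).le (inv_le_one_of_one_le₀ ?_)
  rw [Real.one_le_sqrt]
  linarith [Real.pi_gt_three]

theorem exists_abs_aeval_le_mul_one_add_abs_pow (p : Polynomial ℤ) :
    ∃ C : ℝ, ∀ x : ℝ, |Polynomial.aeval x p| ≤ C * (1 + |x|) ^ p.natDegree := by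
  refine ⟨∑ i ∈ Finset.range (p.natDegree + 1), |(p.coeff i : ℝ)|, fun x => ?_⟩
  rw [Polynomial.aeval_eq_sum_range, Finset.sum_mul]
  refine (Finset.abs_sum_le_sum_abs _ _).trans (Finset.sum_le_sum fun i hi => ?_)
  rw [zsmul_eq_mul, abs_mul, abs_pow]
  gcongr
  calc |x| ^ i ≤ (1 + |x|) ^ i := by gcongr; linarith
    _ ≤ (1 + |x|) ^ p.natDegree :=
      pow_le_pow_right₀ (by linarith [abs_nonneg x]) (Finset.mem_range_succ_iff.1 hi)

theorem exists_abs_iteratedDeriv_cdf_gaussianReal_le (m : ℕ) : ∃ C : ℝ, ∀ x : ℝ,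
    |iteratedDeriv (m + 1) (cdf (gaussianReal 0 1)) x| ≤
      C * (1 + |x|) ^ m * gaussianPDFReal 0 1 x := by
  obtain ⟨C, hC⟩ := exists_abs_aeval_le_mul_one_add_abs_pow (Polynomial.hermite m)
  rw [Polynomial.natDegree_hermite] at hC
  refine ⟨C, fun x => ?_⟩
  have deriv_cdf : deriv (cdf (gaussianReal 0 1)) =
      fun x => (√(2 * Real.pi))⁻¹ * Real.exp (-(x ^ 2 / 2)) := by
    funext y
    rw [(hasDerivAt_cdf_gaussianReal 0 one_ne_zero y).deriv, gaussianPDFReal_zero_one]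
  have iteratedDeriv_eq : |iteratedDeriv (m + 1) (cdf (gaussianReal 0 1)) x| =
      |Polynomial.aeval x (Polynomial.hermite m)| * gaussianPDFReal 0 1 x := by
    rw [iteratedDeriv_succ', deriv_cdf, iteratedDeriv_const_mul_field, iteratedDeriv_eq_iterate,
      Polynomial.deriv_gaussian_eq_hermite_mul_gaussian, gaussianPDFReal_zero_one]
    simp only [abs_mul, abs_pow, abs_neg, abs_one, one_pow, one_mul, Real.abs_exp]
    rw [abs_of_pos (by positivity : 0 < (√(2 * Real.pi))⁻¹)]
    ring
  rw [iteratedDeriv_eq]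
  gcongr
  exacts [gaussianPDFReal_nonneg 0 1 x, hC x]

end NormalCDF

local notation "Φ" => cdf (gaussianReal 0 1)

section MixtureCDF

variable {L η K : ℝ}

/-- The distribution function of a mixture of the normal law `N(-η, 1)` and, with weight
`exp (-L ^ 2)`, the logistic law of scale `1 / L`. It replaces normal distribution functions
shifted by at most `η`: while the hazard rate of a normal law grows linearly, the logistic
component keeps that of the mixture `O(L)` on the whole line. -/
noncomputable def mixtureCDF (L η x : ℝ) : ℝ :=
  (1 - Real.exp (-L ^ 2)) * Φ (x + η) + Real.exp (-L ^ 2) * Real.sigmoid (L * x)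

/-- The density of `mixtureCDF L η`. -/
noncomputable def mixturePDF (L η x : ℝ) : ℝ :=
  (1 - Real.exp (-L ^ 2)) * gaussianPDFReal 0 1 (x + η) +
    Real.exp (-L ^ 2) * (L * (Real.sigmoid (L * x) * (1 - Real.sigmoid (L * x))))

theorem exp_neg_sq_le_half (hL : 1 ≤ L) : Real.exp (-L ^ 2) ≤ 1 / 2 :=
  calc Real.exp (-L ^ 2) ≤ Real.exp (-1) := Real.exp_le_exp.2 (by nlinarith)
    _ ≤ 1 / 2 := by
      rw [Real.exp_neg, inv_le_comm₀ (Real.exp_pos _) (by norm_num)]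
      linarith [Real.add_one_le_exp (1 : ℝ)]

theorem one_sub_sigmoid_nonneg (y : ℝ) : 0 ≤ 1 - Real.sigmoid y :=
  sub_nonneg.2 (Real.sigmoid_le_one y)

theorem exp_neg_abs_le_two_mul_one_sub_sigmoid (y : ℝ) :
    Real.exp (-|y|) ≤ 2 * (1 - Real.sigmoid y) := by
  rw [← Real.sigmoid_neg, Real.sigmoid_def, neg_neg, ← div_eq_mul_inv,
    le_div_iff₀ (by positivity), mul_add, mul_one, ← Real.exp_add]
  have h₁ : Real.exp (-|y|) ≤ 1 := Real.exp_le_one_iff.2 (neg_nonpos.2 (abs_nonneg y))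
  have h₂ : Real.exp (-|y| + y) ≤ 1 := Real.exp_le_one_iff.2 (by linarith [le_abs_self y])
  linarith

theorem exp_neg_abs_le_four_mul_sigmoid_mul_one_sub (y : ℝ) :
    Real.exp (-|y|) ≤ 4 * (Real.sigmoid y * (1 - Real.sigmoid y)) := by
  have h₁ := exp_neg_abs_le_two_mul_one_sub_sigmoid y
  have h₂ := exp_neg_abs_le_two_mul_one_sub_sigmoid (-y)
  rw [Real.sigmoid_neg, abs_neg, sub_sub_cancel] at h₂
  nlinarith [Real.sigmoid_nonneg y, one_sub_sigmoid_nonneg y]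

theorem mixtureCDF_nonneg (hL : 1 ≤ L) (x : ℝ) : 0 ≤ mixtureCDF L η x :=
  add_nonneg (mul_nonneg (by linarith [exp_neg_sq_le_half hL]) (cdf_nonneg _ _))
    (mul_nonneg (Real.exp_pos _).le (Real.sigmoid_nonneg _))

theorem one_sub_mixtureCDF (x : ℝ) : 1 - mixtureCDF L η x =
    (1 - Real.exp (-L ^ 2)) * (1 - Φ (x + η)) +
      Real.exp (-L ^ 2) * (1 - Real.sigmoid (L * x)) := by
  unfold mixtureCDF
  ring

theorem mixtureCDF_le_one (hL : 1 ≤ L) (x : ℝ) : mixtureCDF L η x ≤ 1 := by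
  rw [← sub_nonneg, one_sub_mixtureCDF]
  exact add_nonneg
    (mul_nonneg (by linarith [exp_neg_sq_le_half hL]) (sub_nonneg.2 (cdf_le_one _ _)))
    (mul_nonneg (Real.exp_pos _).le (one_sub_sigmoid_nonneg _))

theorem hasDerivAt_mixtureCDF (L η x : ℝ) :
    HasDerivAt (mixtureCDF L η) (mixturePDF L η x) x := by
  have normal := (hasDerivAt_cdf_gaussianReal 0 one_ne_zero (x + η)).comp_add_const x η
  have logistic := (Real.hasDerivAt_sigmoid (L * x)).comp x ((hasDerivAt_id x).const_mul L)
  rw [mul_one, mul_comm _ L] at logistic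
  exact (normal.const_mul _).add (logistic.const_mul _)

theorem continuous_mixtureCDF (L η : ℝ) : Continuous (mixtureCDF L η) :=
  continuous_iff_continuousAt.2 fun x => (hasDerivAt_mixtureCDF L η x).continuousAt

theorem continuous_mixturePDF (L η : ℝ) : Continuous (mixturePDF L η) := by
  unfold mixturePDF gaussianPDFReal
  fun_prop

theorem gaussianPDFReal_le_two_mul_mixturePDF (hL : 1 ≤ L) (x : ℝ) :
    gaussianPDFReal 0 1 (x + η) ≤ 2 * mixturePDF L η x := by
  have logistic : 0 ≤ Real.exp (-L ^ 2) *
      (L * (Real.sigmoid (L * x) * (1 - Real.sigmoid (L * x)))) := by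
    have := one_sub_sigmoid_nonneg (L * x)
    have := Real.sigmoid_nonneg (L * x)
    positivity
  have normal := mul_le_mul_of_nonneg_right
    (by linarith [exp_neg_sq_le_half hL] : 1 / 2 ≤ 1 - Real.exp (-L ^ 2))
    (gaussianPDFReal_nonneg 0 1 (x + η))
  unfold mixturePDF
  linarith

theorem mixturePDF_nonneg (hL : 1 ≤ L) (x : ℝ) : 0 ≤ mixturePDF L η x := by
  linarith [gaussianPDFReal_nonneg 0 1 (x + η),
    gaussianPDFReal_le_two_mul_mixturePDF (η := η) hL x]

theorem exp_neg_sq_mul_exp_neg_abs_le_mixturePDF (hL : 1 ≤ L) (x : ℝ) :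
    Real.exp (-L ^ 2) * Real.exp (-|L * x|) ≤ 4 * mixturePDF L η x := by
  have normal : 0 ≤ (1 - Real.exp (-L ^ 2)) * gaussianPDFReal 0 1 (x + η) :=
    mul_nonneg (by linarith [exp_neg_sq_le_half hL]) (gaussianPDFReal_nonneg _ _ _)
  have logistic : Real.exp (-L ^ 2) * Real.exp (-|L * x|) ≤ Real.exp (-L ^ 2) *
      (4 * (L * (Real.sigmoid (L * x) * (1 - Real.sigmoid (L * x))))) := by
    have := mul_nonneg (Real.sigmoid_nonneg (L * x)) (one_sub_sigmoid_nonneg (L * x))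
    gcongr
    exact (exp_neg_abs_le_four_mul_sigmoid_mul_one_sub _).trans
      (by linarith [le_mul_of_one_le_left this hL])
  unfold mixturePDF
  linarith

theorem one_sub_cdf_le_two_mul_one_sub_mixtureCDF (hL : 1 ≤ L) (x : ℝ) :
    1 - Φ (x + η) ≤ 2 * (1 - mixtureCDF L η x) := by
  have logistic := mul_nonneg (Real.exp_pos (-L ^ 2)).le (one_sub_sigmoid_nonneg (L * x))
  have normal := mul_le_mul_of_nonneg_right
    (by linarith [exp_neg_sq_le_half hL] : 1 / 2 ≤ 1 - Real.exp (-L ^ 2))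
    (sub_nonneg.2 (cdf_le_one (gaussianReal 0 1) (x + η)))
  rw [one_sub_mixtureCDF]
  linarith

theorem exp_neg_sq_mul_one_sub_sigmoid_le (hL : 1 ≤ L) (x : ℝ) :
    Real.exp (-L ^ 2) * (1 - Real.sigmoid (L * x)) ≤ 1 - mixtureCDF L η x := by
  rw [one_sub_mixtureCDF]
  exact le_add_of_nonneg_left
    (mul_nonneg (by linarith [exp_neg_sq_le_half hL]) (sub_nonneg.2 (cdf_le_one _ _)))

theorem exp_neg_sq_div_four_le_of_lt_abs {β x : ℝ} (hL : 1 ≤ L) (hηK : η ≤ K)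
    (hβ : 8 * L < |β|) (hx : |x - β| ≤ η) :
    Real.exp (-(x ^ 2 / 4)) ≤ Real.exp (K ^ 2) * (Real.exp (-L ^ 2) * Real.exp (-|L * β|)) := by
  rw [← Real.exp_add, ← Real.exp_add, Real.exp_le_exp, abs_mul,
    abs_of_pos (by linarith : 0 < L)]
  have dist_sq : (x - β) ^ 2 ≤ K ^ 2 := by
    rw [← sq_abs]
    exact pow_le_pow_left₀ (abs_nonneg _) (hx.trans hηK) 2
  have sq_le : β ^ 2 ≤ 3 / 2 * x ^ 2 + 3 * K ^ 2 := by
    nlinarith [sq_nonneg (x - 2 * (β - x))]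
  rw [← sq_abs β] at sq_le
  have : L ^ 2 ≤ |β| ^ 2 / 64 := by nlinarith
  have : L * |β| ≤ |β| ^ 2 / 8 := by nlinarith [abs_nonneg β]
  nlinarith [sq_nonneg K, sq_nonneg x]

theorem gaussianPDFReal_le_of_abs_le {β x : ℝ} (hL : 1 ≤ L) (hη : 0 ≤ η) (hLη : L * η ≤ K)
    (hβ : |β| ≤ 8 * L) (hx : |x - β| ≤ η) :
    gaussianPDFReal 0 1 x ≤ Real.exp (16 * K + 2 * K ^ 2) * gaussianPDFReal 0 1 (β + η) := by
  simp only [gaussianPDFReal_zero_one]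
  rw [mul_left_comm, ← Real.exp_add]
  refine mul_le_mul_of_nonneg_left (Real.exp_le_exp.2 ?_) (by positivity)
  have hηK : η ≤ K := (le_mul_of_one_le_left hη hL).trans hLη
  rw [abs_le] at hx hβ
  have sq_sub_sq : |(β + η - x) * (β + η + x)| ≤ 2 * η * (16 * L + 2 * η) := by
    rw [abs_mul]
    gcongr <;> rw [abs_le] <;> constructor <;> linarith
  nlinarith [(abs_le.1 sq_sub_sq).2]

theorem one_add_abs_pow_mul_exp_le (m : ℕ) (x : ℝ) :
    (1 + |x|) ^ m * Real.exp (-(x ^ 2 / 4)) ≤ m.factorial * Real.exp 2 := by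
  have pow_le := Real.pow_div_factorial_le_exp (x := 1 + |x|) (by positivity) m
  rw [div_le_iff₀ (by positivity)] at pow_le
  calc (1 + |x|) ^ m * Real.exp (-(x ^ 2 / 4))
      ≤ Real.exp (1 + |x|) * m.factorial * Real.exp (-(x ^ 2 / 4)) := by gcongr
    _ = m.factorial * Real.exp (1 + |x| + -(x ^ 2 / 4)) := by rw [Real.exp_add (1 + |x|)]; ring
    _ ≤ m.factorial * Real.exp 2 := by
      gcongr
      rw [← sq_abs]
      nlinarith [sq_nonneg (|x| / 2 - 1)]

theorem one_add_abs_pow_mul_gaussianPDFReal_le_of_abs_le {β x : ℝ} (m : ℕ) (hL : 1 ≤ L)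
    (hη : 0 ≤ η) (hLη : L * η ≤ K) (hβ : |β| ≤ 8 * L) (hx : |x - β| ≤ η) :
    (1 + |x|) ^ m * gaussianPDFReal 0 1 x ≤
      (9 + K) ^ m * Real.exp (16 * K + 2 * K ^ 2) * 2 * (L ^ m * mixturePDF L η β) := by
  have abs_x_le : 1 + |x| ≤ (9 + K) * L := by
    have := abs_add_le (x - β) β
    rw [sub_add_cancel] at this
    have hηK : η ≤ K := (le_mul_of_one_le_left hη hL).trans hLη
    have := le_mul_of_one_le_right (hη.trans hηK) hL
    linarith
  calc (1 + |x|) ^ m * gaussianPDFReal 0 1 x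
      ≤ ((9 + K) * L) ^ m *
          (Real.exp (16 * K + 2 * K ^ 2) * (2 * mixturePDF L η β)) := by
        have := (abs_nonneg x).trans ((le_add_of_nonneg_left zero_le_one).trans abs_x_le)
        gcongr ?_ ^ m * ?_
        · exact gaussianPDFReal_nonneg _ _ _
        · exact (gaussianPDFReal_le_of_abs_le hL hη hLη hβ hx).trans
            (by gcongr; exact gaussianPDFReal_le_two_mul_mixturePDF hL β)
    _ = _ := by rw [mul_pow]; ring

theorem one_add_abs_pow_mul_gaussianPDFReal_le_of_lt_abs {β x : ℝ} (m : ℕ) (hL : 1 ≤ L)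
    (hηK : η ≤ K) (hβ : 8 * L < |β|) (hx : |x - β| ≤ η) :
    (1 + |x|) ^ m * gaussianPDFReal 0 1 x ≤
      m.factorial * Real.exp 2 * Real.exp (K ^ 2) * 4 * (L ^ m * mixturePDF L η β) := by
  have exp_eq : Real.exp (-(x ^ 2 / 2)) = Real.exp (-(x ^ 2 / 4)) * Real.exp (-(x ^ 2 / 4)) := by
    rw [← Real.exp_add]
    ring_nf
  have pdf_le : mixturePDF L η β ≤ L ^ m * mixturePDF L η β :=
    le_mul_of_one_le_left (mixturePDF_nonneg hL β) (one_le_pow₀ hL)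
  calc (1 + |x|) ^ m * gaussianPDFReal 0 1 x
      ≤ (1 + |x|) ^ m * Real.exp (-(x ^ 2 / 2)) := by
        gcongr
        exact gaussianPDFReal_zero_one_le x
    _ = (1 + |x|) ^ m * Real.exp (-(x ^ 2 / 4)) * Real.exp (-(x ^ 2 / 4)) := by
        rw [exp_eq, mul_assoc]
    _ ≤ m.factorial * Real.exp 2 *
          (Real.exp (K ^ 2) * (4 * (L ^ m * mixturePDF L η β))) := by
        refine mul_le_mul (one_add_abs_pow_mul_exp_le m x) ?_ (Real.exp_pos _).le (by positivity)
        refine (exp_neg_sq_div_four_le_of_lt_abs hL hηK hβ hx).trans ?_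
        refine mul_le_mul_of_nonneg_left ?_ (Real.exp_pos _).le
        exact (exp_neg_sq_mul_exp_neg_abs_le_mixturePDF hL β).trans (by gcongr)
    _ = _ := by ring

theorem exists_abs_iteratedDeriv_cdf_gaussianReal_le_mixturePDF (K : ℝ) (m : ℕ) :
    ∃ κ : ℝ, ∀ ⦃L η : ℝ⦄, 1 ≤ L → 0 ≤ η → L * η ≤ K → ∀ ⦃β x : ℝ⦄, |x - β| ≤ η →
      |iteratedDeriv (m + 1) Φ x| ≤ κ * (L ^ m * mixturePDF L η β) := by
  obtain ⟨C, hC⟩ := exists_abs_iteratedDeriv_cdf_gaussianReal_le m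
  let A := max ((9 + K) ^ m * Real.exp (16 * K + 2 * K ^ 2) * 2)
    (m.factorial * Real.exp 2 * Real.exp (K ^ 2) * 4)
  refine ⟨|C| * A, fun L η hL hη hLη β x hx => ?_⟩
  have hηK : η ≤ K := (le_mul_of_one_le_left hη hL).trans hLη
  have pdf_nonneg : 0 ≤ L ^ m * mixturePDF L η β :=
    mul_nonneg (by positivity) (mixturePDF_nonneg hL β)
  have hermite_le : (1 + |x|) ^ m * gaussianPDFReal 0 1 x ≤ A * (L ^ m * mixturePDF L η β) := by
    rcases le_or_gt |β| (8 * L) with hβ | hβ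
    · exact (one_add_abs_pow_mul_gaussianPDFReal_le_of_abs_le m hL hη hLη hβ hx).trans
        (mul_le_mul_of_nonneg_right (le_max_left _ _) pdf_nonneg)
    · exact (one_add_abs_pow_mul_gaussianPDFReal_le_of_lt_abs m hL hηK hβ hx).trans
        (mul_le_mul_of_nonneg_right (le_max_right _ _) pdf_nonneg)
  calc |iteratedDeriv (m + 1) Φ x|
      ≤ C * ((1 + |x|) ^ m * gaussianPDFReal 0 1 x) := (hC x).trans_eq (mul_assoc _ _ _)
    _ ≤ |C| * (A * (L ^ m * mixturePDF L η β)) := by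
        gcongr
        · exact mul_nonneg (by positivity) (gaussianPDFReal_nonneg _ _ _)
        · exact le_abs_self C
    _ = _ := by ring

theorem gaussianPDFReal_le_mul_one_sub_cdf {x : ℝ} (hL : 1 ≤ L) (hK : 0 ≤ K) (hx : x ≤ K * L) :
    gaussianPDFReal 0 1 x ≤ Real.exp (K + 1) * (L * (1 - Φ x)) := by
  have hL₀ : 0 < L := by linarith
  have step_pos : 0 < 1 / L := by positivity
  obtain ⟨c, ⟨hxc, hcx⟩, hc⟩ := exists_hasDerivAt_eq_slope Φ (gaussianPDFReal 0 1)
    (lt_add_of_pos_right x step_pos)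
    (contDiff_cdf_gaussianReal 0 one_ne_zero).continuous.continuousOn
    fun y _ => hasDerivAt_cdf_gaussianReal 0 one_ne_zero y
  have pdf_c_le : gaussianPDFReal 0 1 c ≤ L * (1 - Φ x) := by
    rw [hc, add_sub_cancel_left, div_div_eq_mul_div, div_one, mul_comm]
    gcongr
    exact cdf_le_one _ _
  have pdf_x_le : gaussianPDFReal 0 1 x ≤ Real.exp (K + 1) * gaussianPDFReal 0 1 c := by
    simp only [gaussianPDFReal_zero_one]
    rw [mul_left_comm, ← Real.exp_add]
    refine mul_le_mul_of_nonneg_left (Real.exp_le_exp.2 ?_) (by positivity)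
    obtain ⟨t, rfl⟩ : ∃ t, c = x + t := ⟨c - x, by ring⟩
    have hLt : L * t ≤ 1 := by
      rw [mul_comm, ← le_div_iff₀ hL₀]
      linarith
    have : t ≤ 1 := by nlinarith
    nlinarith
  exact pdf_x_le.trans (by gcongr)

theorem gaussianPDFReal_le_mul_one_sub_mixtureCDF (hL : 1 ≤ L) (hη : 0 ≤ η) (hLη : L * η ≤ K)
    (x : ℝ) : gaussianPDFReal 0 1 (x + η) ≤
      (2 * Real.exp (9 + K) + 2 * Real.exp (K ^ 2)) * (L * (1 - mixtureCDF L η x)) := by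
  have hηK : η ≤ K := (le_mul_of_one_le_left hη hL).trans hLη
  have survival_nonneg : 0 ≤ 1 - mixtureCDF L η x := sub_nonneg.2 (mixtureCDF_le_one hL x)
  rcases le_or_gt |x| (8 * L) with hx | hx
  · calc gaussianPDFReal 0 1 (x + η)
        ≤ Real.exp (8 + K + 1) * (L * (1 - Φ (x + η))) :=
          gaussianPDFReal_le_mul_one_sub_cdf hL (by linarith) (by nlinarith [le_abs_self x])
      _ ≤ Real.exp (8 + K + 1) * (L * (2 * (1 - mixtureCDF L η x))) := by
          gcongr
          exact one_sub_cdf_le_two_mul_one_sub_mixtureCDF hL x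
      _ = 2 * Real.exp (9 + K) * (L * (1 - mixtureCDF L η x)) := by ring_nf
      _ ≤ _ := by gcongr; linarith [Real.exp_pos (K ^ 2)]
  · calc gaussianPDFReal 0 1 (x + η)
        ≤ Real.exp (-((x + η) ^ 2 / 4)) := (gaussianPDFReal_zero_one_le _).trans
          (Real.exp_le_exp.2 (by linarith [sq_nonneg (x + η)]))
      _ ≤ Real.exp (K ^ 2) * (Real.exp (-L ^ 2) * Real.exp (-|L * x|)) :=
          exp_neg_sq_div_four_le_of_lt_abs hL hηK hx (by rw [add_sub_cancel_left, abs_of_nonneg hη])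
      _ ≤ Real.exp (K ^ 2) * (Real.exp (-L ^ 2) * (2 * (1 - Real.sigmoid (L * x)))) := by
          gcongr
          exact exp_neg_abs_le_two_mul_one_sub_sigmoid _
      _ ≤ 2 * Real.exp (K ^ 2) * (L * (1 - mixtureCDF L η x)) := by
          rw [mul_left_comm _ 2, mul_left_comm, mul_assoc]
          gcongr ?_ * (?_ * ?_)
          exact (exp_neg_sq_mul_one_sub_sigmoid_le hL x).trans
            (le_mul_of_one_le_left survival_nonneg hL)
      _ ≤ _ := by gcongr; linarith [Real.exp_pos (9 + K)]

theorem mixturePDF_le_mul_one_sub_mixtureCDF (hL : 1 ≤ L) (hη : 0 ≤ η) (hLη : L * η ≤ K)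
    (x : ℝ) : mixturePDF L η x ≤
      (2 * Real.exp (9 + K) + 2 * Real.exp (K ^ 2) + 1) * (L * (1 - mixtureCDF L η x)) := by
  have normal : (1 - Real.exp (-L ^ 2)) * gaussianPDFReal 0 1 (x + η) ≤
      gaussianPDFReal 0 1 (x + η) :=
    mul_le_of_le_one_left (gaussianPDFReal_nonneg _ _ _) (sub_le_self _ (Real.exp_pos _).le)
  have logistic : Real.exp (-L ^ 2) * (L * (Real.sigmoid (L * x) * (1 - Real.sigmoid (L * x)))) ≤
      L * (1 - mixtureCDF L η x) := by
    rw [mul_left_comm]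
    gcongr
    refine le_trans ?_ (exp_neg_sq_mul_one_sub_sigmoid_le hL x)
    gcongr
    exact mul_le_of_le_one_left (one_sub_sigmoid_nonneg _) (Real.sigmoid_le_one _)
  have := gaussianPDFReal_le_mul_one_sub_mixtureCDF hL hη hLη x
  unfold mixturePDF
  linarith

/-- Domination of the normal law by `mixtureCDF L η`: up to the constant `κ`, the hazard rate of
the mixture is at most `L`, and its density controls the derivatives of orders `1, …, n` of the
normal distribution function within distance `η`. -/
structure MixtureControl (n : ℕ) (κ L η : ℝ) : Prop where
  one_le : 1 ≤ κ
  mixturePDF_le (β : ℝ) : mixturePDF L η β ≤ κ * (L * (1 - mixtureCDF L η β))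
  abs_iteratedDeriv_le {m : ℕ} (hm : m < n) {β x : ℝ} (hx : |x - β| ≤ η) :
    |iteratedDeriv (m + 1) Φ x| ≤ κ * (L ^ m * mixturePDF L η β)

theorem exists_mixtureControl (n : ℕ) (K : ℝ) :
    ∃ κ : ℝ, ∀ ⦃L η : ℝ⦄, 1 ≤ L → 0 ≤ η → L * η ≤ K → MixtureControl n κ L η := by
  choose κ hκ using exists_abs_iteratedDeriv_cdf_gaussianReal_le_mixturePDF K
  obtain ⟨M, hM⟩ := Finset.exists_le (insert 1 (insert
    (2 * Real.exp (9 + K) + 2 * Real.exp (K ^ 2) + 1) ((Finset.range n).image κ)))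
  simp only [Finset.mem_insert, Finset.mem_image, Finset.mem_range, forall_eq_or_imp,
    forall_exists_index, and_imp, forall_apply_eq_imp_iff₂] at hM
  obtain ⟨hM_one, hM_hazard, hM_deriv⟩ := hM
  refine ⟨M, fun L η hL hη hLη => ⟨hM_one, fun β => ?_, fun {m} hm β x hx => ?_⟩⟩
  · have := sub_nonneg.2 (mixtureCDF_le_one (η := η) hL β)
    exact (mixturePDF_le_mul_one_sub_mixtureCDF hL hη hLη β).trans (by gcongr)
  · have := mixturePDF_nonneg (η := η) hL β
    exact (hκ m hL hη hLη hx).trans (by gcongr; exact hM_deriv m hm)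

end MixtureCDF

section GaussianDecomposition

open scoped Matrix

variable {ι : Type*} [Fintype ι] [DecidableEq ι]

theorem map_toLp_eq_multivariateGaussian {γ : Measure (ι → ℝ)}
    (hγ : ∀ l : (ι → ℝ) →ₗ[ℝ] ℝ, ∃ v : NNReal, γ.map l = gaussianReal 0 v)
    {S : Matrix ι ι ℝ} (hS : S.PosSemidef) (hγS : ∀ i j, ∫ z, z i * z j ∂γ = S i j) :
    γ.map (WithLp.toLp 2) = multivariateGaussian 0 S := by
  have : IsGaussian γ := isGaussian_of_map_eq_gaussianReal fun l => ⟨0, hγ l⟩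
  have : IsGaussian (γ.map (WithLp.toLp 2)) :=
    isGaussian_map_equiv (PiLp.continuousLinearEquiv 2 ℝ fun _ : ι => ℝ).symm
  have memLp_coord (i : ι) : MemLp (fun z => z i) 2 γ :=
    IsGaussian.memLp_dual γ (ContinuousLinearMap.proj (R := ℝ) (φ := fun _ : ι => ℝ) i) 2 (by simp)
  have integral_coord (i : ι) : ∫ z, z i ∂γ = 0 := by
    obtain ⟨v, hv⟩ := hγ (LinearMap.proj i)
    rw [← integral_id_gaussianReal (μ := 0) (v := v), ← hv]
    exact (integral_map (φ := fun z : ι → ℝ => z i) (measurable_pi_apply i).aemeasurable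
      aestronglyMeasurable_id).symm
  refine IsGaussian.ext ?_ (ContinuousLinearMap.ext fun x => ContinuousLinearMap.ext fun y => ?_)
  · rw [integral_id_multivariateGaussian', integral_map (by fun_prop) (by fun_prop)]
    ext i
    exact (eval_integral_piLp (fun i => (memLp_coord i).integrable one_le_two) i).trans
      (integral_coord i)
  · rw [covarianceBilin_multivariateGaussian hS]
    refine (covarianceBilin_apply_pi memLp_coord x y).trans ?_
    simp only [covariance_eq_sub (memLp_coord _) (memLp_coord _), Pi.mul_apply, integral_coord,
      hγS, mul_zero, sub_zero, dotProduct, Matrix.mulVec, Finset.mul_sum]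
    exact Finset.sum_congr rfl fun i _ => Finset.sum_congr rfl fun j _ => by ring

theorem multivariateGaussian_add {S T : Matrix ι ι ℝ} (hS : S.PosSemidef) (hT : T.PosSemidef) :
    multivariateGaussian 0 (S + T) = multivariateGaussian 0 S ∗ multivariateGaussian 0 T := by
  refine Measure.ext_of_charFun (funext fun x => ?_)
  rw [charFun_conv, charFun_multivariateGaussian hS, charFun_multivariateGaussian hT,
    charFun_multivariateGaussian (hS.add hT), ← Complex.exp_add, Matrix.add_mulVec,
    dotProduct_add]
  simp only [inner_zero_right]
  push_cast
  ring_nf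

theorem multivariateGaussian_sq_smul_one (σ : ℝ) :
    multivariateGaussian 0 (σ ^ 2 • (1 : Matrix ι ι ℝ)) =
      (Measure.pi fun _ => gaussianReal 0 1).map fun z => WithLp.toLp 2 (σ • z) := by
  have map_stdGaussian : (Measure.pi fun _ => gaussianReal 0 1).map (fun z => WithLp.toLp 2 (σ • z))
      = (stdGaussian (EuclideanSpace ℝ ι)).map (σ • ·) := by
    rw [← map_pi_eq_stdGaussian, Measure.map_map (by fun_prop) (by fun_prop)]
    rfl
  refine map_stdGaussian ▸ Measure.ext_of_charFun (funext fun x => ?_)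
  rw [charFun_map_smul, charFun_stdGaussian,
    charFun_multivariateGaussian (Matrix.PosSemidef.one.smul (sq_nonneg σ)), norm_smul,
    Matrix.smul_mulVec, Matrix.one_mulVec, dotProduct_smul]
  push_cast
  rw [mul_pow, ← Complex.ofReal_pow ‖x‖, ← Complex.ofReal_pow ‖σ‖, Real.norm_eq_abs, sq_abs,
    EuclideanSpace.real_norm_sq_eq]
  simp only [dotProduct, sq, smul_eq_mul, inner_zero_right]
  push_cast
  ring_nf

theorem posSemidef_sub_smul_one {S : Matrix ι ι ℝ} {c : ℝ} (hS : S.IsSymm)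
    (hc : ∀ x : ι → ℝ, c * ∑ i, x i ^ 2 ≤ ∑ i, ∑ j, x i * S i j * x j) :
    (S - c • 1).PosSemidef := by
  refine Matrix.posSemidef_iff_dotProduct_mulVec.2
    ⟨by simpa [Matrix.IsHermitian] using hS.eq, fun x => ?_⟩
  have quadratic_form : x ⬝ᵥ S *ᵥ x = ∑ i, ∑ j, x i * S i j * x j := by
    simp only [dotProduct, Matrix.mulVec, Finset.mul_sum, mul_assoc]
  have norm_sq : x ⬝ᵥ x = ∑ i, x i ^ 2 := by simp only [dotProduct, sq]
  rw [star_trivial, Matrix.sub_mulVec, dotProduct_sub, Matrix.smul_mulVec, Matrix.one_mulVec,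
    dotProduct_smul, smul_eq_mul, quadratic_form, norm_sq]
  exact sub_nonneg.2 (hc x)

theorem exists_eq_map_prod_pi_gaussianReal {γ : Measure (ι → ℝ)}
    (hγ : ∀ l : (ι → ℝ) →ₗ[ℝ] ℝ, ∃ v : NNReal, γ.map l = gaussianReal 0 v)
    {S : Matrix ι ι ℝ} (hγS : ∀ i j, ∫ z, z i * z j ∂γ = S i j)
    {σ : ℝ} (hσ : (S - σ ^ 2 • 1).PosSemidef) :
    ∃ ν : Measure (ι → ℝ), IsProbabilityMeasure ν ∧
      γ = (ν.prod (Measure.pi fun _ => gaussianReal 0 1)).map fun p => p.1 + σ • p.2 := by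
  have hσ_one : (σ ^ 2 • (1 : Matrix ι ι ℝ)).PosSemidef :=
    Matrix.PosSemidef.one.smul (sq_nonneg σ)
  have map_γ := map_toLp_eq_multivariateGaussian hγ
    (sub_add_cancel S (σ ^ 2 • 1) ▸ hσ.add hσ_one) hγS
  rw [← sub_add_cancel S (σ ^ 2 • 1), multivariateGaussian_add hσ hσ_one] at map_γ
  refine ⟨(multivariateGaussian 0 (S - σ ^ 2 • 1)).map WithLp.ofLp,
    Measure.isProbabilityMeasure_map (by fun_prop), ?_⟩
  calc γ = (γ.map (WithLp.toLp 2)).map WithLp.ofLp := by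
        rw [Measure.map_map (by fun_prop) (by fun_prop)]
        exact Measure.map_id.symm
    _ = ((multivariateGaussian 0 (S - σ ^ 2 • 1)).prod
          (Measure.pi fun _ => gaussianReal 0 1)).map fun p => p.1.ofLp + σ • p.2 := by
        rw [map_γ, multivariateGaussian_sq_smul_one, Measure.conv]
        nth_rw 1 [← Measure.map_id (μ := multivariateGaussian 0 (S - σ ^ 2 • 1))]
        rw [Measure.map_prod_map _ _ (by fun_prop) (by fun_prop),
          Measure.map_map (by fun_prop) (by fun_prop), Measure.map_map (by fun_prop) (by fun_prop)]
        rfl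
    _ = _ := by
        nth_rw 2 [← Measure.map_id (μ := Measure.pi fun _ => gaussianReal 0 1)]
        rw [Measure.map_prod_map _ _ (by fun_prop) (by fun_prop),
          Measure.map_map (by fun_prop) (by fun_prop)]
        rfl

end GaussianDecomposition

section LayerCake

variable {α β : Type*} [MeasurableSpace α] [MeasurableSpace β]

theorem measureReal_prod_eq_integral (μ : Measure α) (τ : Measure β) [SFinite μ]
    [IsFiniteMeasure τ] {D : Set (α × β)} (hD : MeasurableSet D) :
    (μ.prod τ).real D = ∫ x, τ.real (Prod.mk x ⁻¹' D) ∂μ := by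
  rw [measureReal_def, Measure.prod_apply hD]
  exact (integral_toReal (measurable_measure_prodMk_left hD).aemeasurable
    (.of_forall fun _ => measure_lt_top _ _)).symm

theorem measureReal_prod_eq_integral_symm (μ : Measure α) (τ : Measure β) [IsFiniteMeasure μ]
    [SFinite τ] {D : Set (α × β)} (hD : MeasurableSet D) :
    (μ.prod τ).real D = ∫ t, μ.real ((fun x => (x, t)) ⁻¹' D) ∂τ := by
  rw [measureReal_def, Measure.prod_apply_symm hD]
  exact (integral_toReal (measurable_measure_prodMk_right hD).aemeasurable
    (.of_forall fun _ => measure_lt_top _ _)).symm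

theorem gphi_eq_mul_volume {φ : ℝ} (hφ : 0 < φ) (M : ℝ) :
    gphi φ M = φ * volume.real (Set.Icc 0 (1 / φ) ∩ Set.Ici M) := by
  have inv_pos : 0 < 1 / φ := one_div_pos.2 hφ
  have inter_eq : Set.Icc 0 (1 / φ) ∩ Set.Ici M = Set.Icc (max 0 M) (1 / φ) := by
    ext t
    simp only [Set.mem_inter_iff, Set.mem_Icc, Set.mem_Ici, max_le_iff]
    tauto
  rw [inter_eq, Real.volume_real_Icc, gphi]
  split_ifs with hM hMφ
  · rw [max_eq_left hM, sub_zero, max_eq_left inv_pos.le, mul_one_div_cancel hφ.ne']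
  · rw [max_eq_right (not_le.1 hM).le, max_eq_left (sub_nonneg.2 hMφ.le), mul_sub,
      mul_one_div_cancel hφ.ne']
  · rw [max_eq_right (not_le.1 hM).le, max_eq_right (sub_nonpos.2 (not_lt.1 hMφ)), mul_zero]

/-- The levels `t ∈ [0, 1 / φ]` for which the inflated rectangle `∏ j, [a j - t, b j + t]` is
nonempty. They index the layer-cake decomposition of `mrect`. -/
def inflationLevels {ι : Type*} (a b : ι → ℝ) (φ : ℝ) : Set ℝ :=
  {t ∈ Set.Icc 0 (1 / φ) | ∀ j, a j - t ≤ b j + t}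

theorem measurableSet_inflationLevels {ι : Type*} (a b : ι → ℝ) (φ : ℝ) :
    MeasurableSet (inflationLevels a b φ) := by
  have eq_inter : inflationLevels a b φ =
      Set.Icc 0 (1 / φ) ∩ ⋂ j, {t | a j - t ≤ b j + t} := by
    ext t
    simp only [inflationLevels, Set.mem_ofPred_eq, Set.mem_inter_iff, Set.mem_iInter]
  rw [eq_inter]
  exact (isClosed_Icc.inter (isClosed_iInter fun j =>
    isClosed_le (by fun_prop) (by fun_prop))).measurableSet

instance isFiniteMeasure_restrict_inflationLevels {ι : Type*} (a b : ι → ℝ) (φ : ℝ) :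
    IsFiniteMeasure (volume.restrict (inflationLevels a b φ)) :=
  isFiniteMeasure_restrict.2 <|
    measure_ne_top_of_subset (fun _ ht => ht.1) (measure_Icc_lt_top (a := 0) (b := 1 / φ)).ne

variable {d : ℕ} (a b : Fin d → ℝ) {φ : ℝ}

theorem mrect_eq_mul_volume (hd : 0 < d) (hφ : 0 < φ) (x : Fin d → ℝ) :
    mrect d a b φ x = φ * (volume.restrict (inflationLevels a b φ)).real
      {t | x ∈ Set.Icc (fun j => a j - t) fun j => b j + t} := by
  have : Nonempty (Fin d) := ⟨⟨0, hd⟩⟩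
  have iSup_le_iff (t : ℝ) : (⨆ j, max (x j - b j) (a j - x j)) ≤ t ↔
      x ∈ Set.Icc (fun j => a j - t) fun j => b j + t := by
    rw [ciSup_le_iff (Set.finite_range _).bddAbove, Set.mem_Icc, Pi.le_def, Pi.le_def,
      ← forall_and]
    refine forall_congr' fun j => ?_
    rw [max_le_iff, sub_le_iff_le_add', sub_le_comm, and_comm]
  rw [mrect, gphi_eq_mul_volume hφ,
    measureReal_restrict_apply' (measurableSet_inflationLevels _ _ _)]
  congr 2
  ext t
  simp only [inflationLevels, Set.mem_inter_iff, Set.mem_Ici, Set.mem_ofPred_eq, iSup_le_iff]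
  exact ⟨fun h => ⟨h.2, h.1, fun j => (h.2.1 j).trans (h.2.2 j)⟩, fun h => ⟨h.2.1, h.1⟩⟩

theorem rhoFn_eq_mul_integral (hd : 0 < d) (hφ : 0 < φ) (ε : ℝ) (γ : Measure (Fin d → ℝ))
    [IsFiniteMeasure γ] (w : Fin d → ℝ) :
    rhoFn d a b φ ε γ w = φ * ∫ t in inflationLevels a b φ,
      γ.real {z | w + ε • z ∈ Set.Icc (fun j => a j - t) fun j => b j + t} := by
  have measurableSet_prod : MeasurableSet {p : (Fin d → ℝ) × ℝ |
      w + ε • p.1 ∈ Set.Icc (fun j => a j - p.2) fun j => b j + p.2} := by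
    simp only [Set.mem_Icc, Set.ofPred_and]
    exact ((isClosed_le (by fun_prop) (by fun_prop)).inter
      (isClosed_le (by fun_prop) (by fun_prop))).measurableSet
  simp only [rhoFn, mrect_eq_mul_volume a b hd hφ, integral_const_mul]
  exact congrArg (φ * ·) ((measureReal_prod_eq_integral _ _ measurableSet_prod).symm.trans
    (measureReal_prod_eq_integral_symm _ _ measurableSet_prod))

end LayerCake

section IntervalProb

/-- If `G` is the distribution function of a symmetric real random variable `Z`, this is the
probability that `y + Z ∈ [u, v]`. -/
noncomputable def intervalProb (G : ℝ → ℝ) (u v y : ℝ) : ℝ :=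
  G (v - y) + G (y - u) - 1

/-- For `g` the derivative of `G`, the rate at which `intervalProb G u v y` grows when the two
ends of `[u, v]` move outwards at unit speed. -/
noncomputable def intervalFlux (g : ℝ → ℝ) (u v y : ℝ) : ℝ :=
  g (v - y) + g (y - u)

variable {G : ℝ → ℝ} {n : ℕ} {κ L η u v x y : ℝ}

theorem contDiff_intervalProb (hG : ContDiff ℝ ∞ G) (u v : ℝ) :
    ContDiff ℝ ∞ (intervalProb G u v) := by
  unfold intervalProb
  fun_prop

theorem abs_iteratedDeriv_succ_intervalProb_le (hG : ContDiff ℝ ∞ G) (m : ℕ) (u v y : ℝ) :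
    |iteratedDeriv (m + 1) (intervalProb G u v) y| ≤
      |iteratedDeriv (m + 1) G (v - y)| + |iteratedDeriv (m + 1) G (y - u)| := by
  have smooth_right : ContDiff ℝ ((m + 1 : ℕ) : WithTop ℕ∞) fun y => G (v - y) :=
    (hG.of_le (by exact_mod_cast le_top)).comp (by fun_prop)
  have smooth_left : ContDiff ℝ ((m + 1 : ℕ) : WithTop ℕ∞) fun y => G (y - u) :=
    (hG.of_le (by exact_mod_cast le_top)).comp (by fun_prop)
  have drop_const : iteratedDeriv (m + 1) (intervalProb G u v) =
      iteratedDeriv (m + 1) fun y => G (v - y) + G (y - u) := by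
    rw [iteratedDeriv_succ', iteratedDeriv_succ']
    exact congrArg (iteratedDeriv m) (funext fun y => deriv_sub_const _)
  rw [drop_const, iteratedDeriv_fun_add smooth_right.contDiffAt smooth_left.contDiffAt,
    iteratedDeriv_comp_const_sub, iteratedDeriv_comp_sub_const]
  refine (abs_add_le _ _).trans_eq ?_
  simp only [smul_eq_mul, abs_mul, abs_neg_one_pow, one_mul]

theorem intervalProb_cdf_nonneg (h : u ≤ v) (y : ℝ) : 0 ≤ intervalProb Φ u v y := by
  have := cdf_gaussianReal_neg (v := 1) one_ne_zero (y - u)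
  have := monotone_cdf (gaussianReal 0 1) (by linarith : -(y - u) ≤ v - y)
  unfold intervalProb
  linarith

theorem measureReal_add_mem_Icc_eq_intervalProb (h : u ≤ v) (y : ℝ) :
    (gaussianReal 0 1).real {z | y + z ∈ Set.Icc u v} = intervalProb Φ u v y := by
  have : {z | y + z ∈ Set.Icc u v} = Set.Icc (u - y) (v - y) := by
    ext z
    simp only [Set.mem_ofPred_eq, Set.mem_Icc, sub_le_iff_le_add', le_sub_iff_add_le']
  rw [this, measureReal_gaussianReal_Icc one_ne_zero (by linarith), neg_sub, intervalProb]

theorem mul_intervalProb_cdf_le_intervalProb_mixtureCDF (hL : 1 ≤ L) (h : u ≤ v)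
    (hxy : |y - x| ≤ η) :
    (1 - Real.exp (-L ^ 2)) * intervalProb Φ u v y ≤
      intervalProb (mixtureCDF L η) u v x := by
  rw [abs_le] at hxy
  have normal : intervalProb Φ u v y ≤ Φ (v - x + η) + Φ (x - u + η) - 1 := by
    have := monotone_cdf (gaussianReal 0 1) (by linarith : v - y ≤ v - x + η)
    have := monotone_cdf (gaussianReal 0 1) (by linarith : y - u ≤ x - u + η)
    unfold intervalProb
    linarith
  have logistic : 0 ≤ Real.sigmoid (L * (v - x)) + Real.sigmoid (L * (x - u)) - 1 := by
    have := Real.sigmoid_neg (L * (x - u))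
    have := Real.sigmoid_le (by nlinarith : -(L * (x - u)) ≤ L * (v - x))
    linarith
  have weight_nonneg : 0 ≤ 1 - Real.exp (-L ^ 2) := by linarith [exp_neg_sq_le_half hL]
  calc (1 - Real.exp (-L ^ 2)) * intervalProb Φ u v y
      ≤ (1 - Real.exp (-L ^ 2)) * (Φ (v - x + η) + Φ (x - u + η) - 1) +
          Real.exp (-L ^ 2) * (Real.sigmoid (L * (v - x)) + Real.sigmoid (L * (x - u)) - 1) :=
        (mul_le_mul_of_nonneg_left normal weight_nonneg).trans
          (le_add_of_nonneg_right (mul_nonneg (Real.exp_pos _).le logistic))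
    _ = intervalProb (mixtureCDF L η) u v x := by
        unfold intervalProb mixtureCDF
        ring

theorem intervalProb_mixtureCDF_nonneg (hL : 1 ≤ L) (hη : 0 ≤ η) (h : u ≤ v) (x : ℝ) :
    0 ≤ intervalProb (mixtureCDF L η) u v x :=
  (mul_nonneg (by linarith [exp_neg_sq_le_half hL]) (intervalProb_cdf_nonneg h x)).trans
    (mul_intervalProb_cdf_le_intervalProb_mixtureCDF hL h (by rwa [sub_self, abs_zero]))

theorem one_add_intervalProb_mixtureCDF_half_mem_Icc (hL : 1 ≤ L) (u v x : ℝ) :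
    (1 + intervalProb (mixtureCDF L η) u v x) / 2 ∈ Set.Icc 0 1 := by
  have := mixtureCDF_nonneg (η := η) hL (v - x)
  have := mixtureCDF_nonneg (η := η) hL (x - u)
  have := mixtureCDF_le_one (η := η) hL (v - x)
  have := mixtureCDF_le_one (η := η) hL (x - u)
  unfold intervalProb
  constructor <;> linarith

theorem intervalFlux_mixturePDF_nonneg (hL : 1 ≤ L) (u v x : ℝ) :
    0 ≤ intervalFlux (mixturePDF L η) u v x :=
  add_nonneg (mixturePDF_nonneg hL _) (mixturePDF_nonneg hL _)

theorem MixtureControl.intervalFlux_le (hκ : MixtureControl n κ L η) (u v x : ℝ) :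
    intervalFlux (mixturePDF L η) u v x ≤
      2 * κ * L * ((1 - intervalProb (mixtureCDF L η) u v x) / 2) := by
  have := hκ.mixturePDF_le (v - x)
  have := hκ.mixturePDF_le (x - u)
  unfold intervalFlux intervalProb
  linarith

theorem MixtureControl.abs_iteratedDeriv_intervalProb_le (hκ : MixtureControl n κ L η)
    (hL : 1 ≤ L) (h : u ≤ v) (hxy : |y - x| ≤ η) {m : ℕ} (hm : m ≤ n) :
    |iteratedDeriv m (intervalProb Φ u v) y| ≤ (1 - Real.exp (-L ^ 2))⁻¹ * (κ ^ m *
      derivFactor L (intervalProb (mixtureCDF L η) u v x)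
        (intervalFlux (mixturePDF L η) u v x) m) := by
  have weight_pos : 0 < 1 - Real.exp (-L ^ 2) := by linarith [exp_neg_sq_le_half hL]
  rw [← div_eq_inv_mul, le_div_iff₀' weight_pos]
  rcases m with _ | m
  · rw [iteratedDeriv_zero, derivFactor, pow_zero, one_mul,
      abs_of_nonneg (intervalProb_cdf_nonneg h y)]
    exact mul_intervalProb_cdf_le_intervalProb_mixtureCDF hL h hxy
  · rw [derivFactor]
    have right := hκ.abs_iteratedDeriv_le hm (β := v - x) (x := v - y)
      (by rwa [sub_sub_sub_cancel_left, abs_sub_comm])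
    have left := hκ.abs_iteratedDeriv_le hm (β := x - u) (x := y - u)
      (by rwa [sub_sub_sub_cancel_right])
    have flux_nonneg : 0 ≤ L ^ m * intervalFlux (mixturePDF L η) u v x :=
      mul_nonneg (by positivity) (intervalFlux_mixturePDF_nonneg hL u v x)
    calc (1 - Real.exp (-L ^ 2)) * |iteratedDeriv (m + 1) (intervalProb Φ u v) y|
        ≤ |iteratedDeriv (m + 1) (intervalProb Φ u v) y| :=
          mul_le_of_le_one_left (abs_nonneg _) (sub_le_self _ (Real.exp_pos _).le)
      _ ≤ |iteratedDeriv (m + 1) Φ (v - y)| + |iteratedDeriv (m + 1) Φ (y - u)| :=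
          abs_iteratedDeriv_succ_intervalProb_le (contDiff_cdf_gaussianReal 0 one_ne_zero) m u v y
      _ ≤ κ * (L ^ m * intervalFlux (mixturePDF L η) u v x) := by
          unfold intervalFlux
          linarith
      _ ≤ κ ^ (m + 1) * (L ^ m * intervalFlux (mixturePDF L η) u v x) :=
          mul_le_mul_of_nonneg_right (le_self_pow₀ hκ.one_le m.succ_ne_zero) flux_nonneg

theorem exists_abs_iteratedDeriv_intervalProb_le (m : ℕ) :
    ∃ C : ℝ, ∀ u v y : ℝ, |iteratedDeriv m (intervalProb Φ u v) y| ≤ C := by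
  rcases m with _ | m
  · refine ⟨1, fun u v y => ?_⟩
    have nonneg := cdf_nonneg (gaussianReal 0 1)
    have le_one := cdf_le_one (gaussianReal 0 1)
    rw [iteratedDeriv_zero, intervalProb, abs_le]
    constructor <;> linarith [nonneg (v - y), nonneg (y - u), le_one (v - y), le_one (y - u)]
  · obtain ⟨κ, hκ⟩ := exists_mixtureControl (m + 1) 0
    have control := hκ le_rfl le_rfl (one_mul 0).le
    have pdf_le (x : ℝ) : mixturePDF 1 0 x ≤ κ := (control.mixturePDF_le x).trans <| by
      rw [one_mul]
      exact mul_le_of_le_one_right (zero_le_one.trans control.one_le)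
        (sub_le_self _ (mixtureCDF_nonneg le_rfl x))
    have deriv_le (x : ℝ) : |iteratedDeriv (m + 1) Φ x| ≤ κ * κ :=
      (control.abs_iteratedDeriv_le m.lt_succ_self (by rw [sub_self, abs_zero])).trans <| by
        rw [one_pow, one_mul]
        exact mul_le_mul_of_nonneg_left (pdf_le x) (zero_le_one.trans control.one_le)
    refine ⟨κ * κ + κ * κ, fun u v y => ?_⟩
    exact (abs_iteratedDeriv_succ_intervalProb_le (contDiff_cdf_gaussianReal 0 one_ne_zero) m u v
      y).trans (add_le_add (deriv_le _) (deriv_le _))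

end IntervalProb

section BoxProb

variable {ι : Type*} [Fintype ι]

/-- The probability that `x + Z` lies in the box `∏ j, [u j, v j]`, for a standard normal vector
`Z`. -/
noncomputable def boxProb (u v x : ι → ℝ) : ℝ :=
  ∏ j, intervalProb Φ (u j) (v j) (x j)

theorem measureReal_add_mem_Icc_eq_boxProb {u v : ι → ℝ} (h : u ≤ v) (x : ι → ℝ) :
    (Measure.pi fun _ : ι => gaussianReal 0 1).real {z | x + z ∈ Set.Icc u v} =
      boxProb u v x := by
  have eq_pi : {z | x + z ∈ Set.Icc u v} =
      Set.univ.pi fun j => {z | x j + z ∈ Set.Icc (u j) (v j)} := by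
    ext z
    simp only [Set.mem_ofPred_eq, Set.mem_Icc, Pi.le_def, Pi.add_apply, Set.mem_univ_pi, forall_and]
  rw [eq_pi, measureReal_def, Measure.pi_pi, ENNReal.toReal_prod]
  exact Finset.prod_congr rfl fun j _ => measureReal_add_mem_Icc_eq_intervalProb (h j) (x j)

theorem contDiff_boxProb :
    ContDiff ℝ ∞ fun p : ((ι → ℝ) × (ι → ℝ)) × (ι → ℝ) => boxProb p.1.1 p.1.2 p.2 := by
  have := contDiff_cdf_gaussianReal 0 (v := 1) one_ne_zero
  unfold boxProb intervalProb
  fun_prop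

section Deriv

variable [DecidableEq ι] {n : ℕ}

theorem iteratedFDeriv_boxProb_apply_single (u v : ι → ℝ) (J : Fin n → ι) (x : ι → ℝ) :
    (iteratedFDeriv ℝ n (boxProb u v) x fun i => Pi.single (J i) 1) =
      ∏ j, iteratedDeriv (indexCount J j) (intervalProb Φ (u j) (v j)) (x j) :=
  iteratedFDeriv_prod_apply_single (fun j => (contDiff_intervalProb
    (contDiff_cdf_gaussianReal 0 one_ne_zero) (u j) (v j)).of_le (by exact_mod_cast le_top)) J x

theorem exists_norm_iteratedFDeriv_boxProb_le (ι : Type*) [Fintype ι] (n : ℕ) :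
    ∃ C : ℝ, ∀ u v x : ι → ℝ, ‖iteratedFDeriv ℝ n (boxProb u v) x‖ ≤ C := by
  classical
  choose C hC using exists_abs_iteratedDeriv_intervalProb_le
  refine ⟨∑ J : Fin n → ι, ∏ j, C (indexCount J j), fun u v x => ?_⟩
  refine (opNorm_le_sum_norm_apply_single _).trans (Finset.sum_le_sum fun J _ => ?_)
  rw [iteratedFDeriv_boxProb_apply_single, norm_prod]
  exact Finset.prod_le_prod (fun _ _ => norm_nonneg _) fun j _ => hC _ _ _ _

end Deriv

section Integral

variable {Ω : Type*} [MeasurableSpace Ω] {μ : Measure Ω} [IsFiniteMeasure μ]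
  {U V : Ω → ι → ℝ}

theorem integrable_iteratedFDeriv_boxProb (hU : Measurable U) (hV : Measurable V) (k : ℕ)
    (x : ι → ℝ) : Integrable (fun a => iteratedFDeriv ℝ k (boxProb (U a) (V a)) x) μ := by
  obtain ⟨C, hC⟩ := exists_norm_iteratedFDeriv_boxProb_le ι k
  have continuous_deriv : Continuous fun p : (ι → ℝ) × (ι → ℝ) =>
      iteratedFDeriv ℝ k (boxProb p.1 p.2) x :=
    (contDiff_iteratedFDeriv_uncurry (F := fun p : (ι → ℝ) × (ι → ℝ) => boxProb p.1 p.2)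
      contDiff_boxProb k).continuous.comp (Continuous.prodMk_left x)
  have strongly_measurable := continuous_deriv.comp_aestronglyMeasurable
    (hU.prodMk hV).aestronglyMeasurable (μ := μ)
  exact .of_bound strongly_measurable C (.of_forall fun a => hC _ _ _)

theorem integrable_boxProb (hU : Measurable U) (hV : Measurable V) (x : ι → ℝ) :
    Integrable (fun a => boxProb (U a) (V a) x) μ :=
  (continuousMultilinearCurryFin0 ℝ (ι → ℝ) ℝ).toContinuousLinearEquiv.toContinuousLinearMap
    |>.integrable_comp (integrable_iteratedFDeriv_boxProb hU hV 0 x)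

/-- The average over `a` of the probability that `x + Z` lies in the random box
`∏ j, [U a j, V a j]`. The smoothed rectangle `rhoFn` is of this form up to scaling. -/
noncomputable def meanBoxProb (μ : Measure Ω) (U V : Ω → ι → ℝ) (x : ι → ℝ) : ℝ :=
  ∫ a, boxProb (U a) (V a) x ∂μ

theorem hasFTaylorSeriesUpTo_meanBoxProb (hU : Measurable U) (hV : Measurable V) (n : ℕ) :
    HasFTaylorSeriesUpTo n (meanBoxProb μ U V)
      fun x k => ∫ a, iteratedFDeriv ℝ k (boxProb (U a) (V a)) x ∂μ := by
  choose C hC using exists_norm_iteratedFDeriv_boxProb_le ι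
  have smooth (a : Ω) : ContDiff ℝ n (boxProb (U a) (V a)) :=
    (contDiff_boxProb.comp (contDiff_prodMk_right (U a, V a))).of_le (by exact_mod_cast le_top)
  exact hasFTaylorSeriesUpTo_integral (bound := fun k _ => C k) (.of_forall smooth)
    (fun k _ x => (integrable_iteratedFDeriv_boxProb hU hV k x).aestronglyMeasurable)
    (fun k _ => .of_forall fun a => hC k _ _) fun k _ => integrable_const _

theorem iteratedFDeriv_meanBoxProb_apply (hU : Measurable U) (hV : Measurable V) (n : ℕ)
    (x : ι → ℝ) (m : Fin n → ι → ℝ) :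
    iteratedFDeriv ℝ n (meanBoxProb μ U V) x m =
      ∫ a, iteratedFDeriv ℝ n (boxProb (U a) (V a)) x m ∂μ := by
  rw [← (hasFTaylorSeriesUpTo_meanBoxProb hU hV n).eq_iteratedFDeriv le_rfl]
  exact ContinuousMultilinearMap.integral_apply (integrable_iteratedFDeriv_boxProb hU hV n x) m

end Integral

end BoxProb

section BoxFlux

variable {ι : Type*} [Fintype ι] [DecidableEq ι] {n : ℕ} {κ L η : ℝ} {u v : ι → ℝ}

/-- The majorant, up to constants, of the partial derivative `∂_J` of `boxProb u v` near `x`, in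
which `mixtureCDF L η` and its density replace the normal distribution function and its
derivatives. -/
noncomputable def boxMajorant (L η : ℝ) (J : Fin n → ι) (u v x : ι → ℝ) : ℝ :=
  ∏ j, derivFactor L (intervalProb (mixtureCDF L η) (u j) (v j) (x j))
    (intervalFlux (mixturePDF L η) (u j) (v j) (x j)) (indexCount J j)

/-- The rate at which the product of the numbers `(1 + intervalProb (mixtureCDF L η) …) / 2`
grows when all sides of the box `∏ j, [u j, v j]` move outwards at speed `2`. -/
noncomputable def boxFlux (L η : ℝ) (u v x : ι → ℝ) : ℝ :=
  ∑ i, intervalFlux (mixturePDF L η) (u i) (v i) (x i) *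
    ∏ j ∈ Finset.univ.erase i, (1 + intervalProb (mixtureCDF L η) (u j) (v j) (x j)) / 2

theorem continuous_boxMajorant (L η : ℝ) (J : Fin n → ι) :
    Continuous fun p : (ι → ℝ) × (ι → ℝ) × (ι → ℝ) => boxMajorant L η J p.1 p.2.1 p.2.2 := by
  have := continuous_mixtureCDF L η
  have := continuous_mixturePDF L η
  unfold boxMajorant intervalProb intervalFlux
  refine continuous_finsetProd _ fun j _ => ?_
  cases indexCount J j <;> simp only [derivFactor] <;> fun_prop

theorem continuous_boxFlux (L η : ℝ) :
    Continuous fun p : (ι → ℝ) × (ι → ℝ) × (ι → ℝ) => boxFlux L η p.1 p.2.1 p.2.2 := by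
  have := continuous_mixtureCDF L η
  have := continuous_mixturePDF L η
  unfold boxFlux intervalProb intervalFlux
  fun_prop

theorem boxMajorant_nonneg (hL : 1 ≤ L) (hη : 0 ≤ η) (J : Fin n → ι) (h : u ≤ v)
    (x : ι → ℝ) : 0 ≤ boxMajorant L η J u v x :=
  Finset.prod_nonneg fun j _ => derivFactor_nonneg (zero_le_one.trans hL)
    (intervalProb_mixtureCDF_nonneg hL hη (h j) (x j)) (intervalFlux_mixturePDF_nonneg hL _ _ _) _

theorem boxFlux_nonneg (hL : 1 ≤ L) (u v x : ι → ℝ) : 0 ≤ boxFlux L η u v x :=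
  Finset.sum_nonneg fun _ _ => mul_nonneg (intervalFlux_mixturePDF_nonneg hL _ _ _)
    (Finset.prod_nonneg fun _ _ => (one_add_intervalProb_mixtureCDF_half_mem_Icc hL _ _ _).1)

theorem MixtureControl.boxFlux_le (hκ : MixtureControl n κ L η) (hL : 1 ≤ L)
    (u v x : ι → ℝ) : boxFlux L η u v x ≤ Fintype.card ι * (2 * κ * L) := by
  have half_mem (j : ι) :=
    one_add_intervalProb_mixtureCDF_half_mem_Icc (η := η) hL (u j) (v j) (x j)
  rw [← nsmul_eq_mul, ← Finset.card_univ]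
  refine Finset.sum_le_card_nsmul _ _ _ fun i _ => ?_
  have κL_nonneg : 0 ≤ 2 * κ * L := by
    have := hκ.one_le
    positivity
  calc _ ≤ intervalFlux (mixturePDF L η) (u i) (v i) (x i) :=
        mul_le_of_le_one_right (intervalFlux_mixturePDF_nonneg hL _ _ _)
          (Finset.prod_le_one (fun j _ => (half_mem j).1) fun j _ => (half_mem j).2)
    _ ≤ 2 * κ * L * ((1 - intervalProb (mixtureCDF L η) (u i) (v i) (x i)) / 2) :=
        hκ.intervalFlux_le _ _ _
    _ ≤ 2 * κ * L := mul_le_of_le_one_right κL_nonneg (by linarith [(half_mem i).1])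

theorem MixtureControl.sum_boxMajorant_le (hκ : MixtureControl (n + 1) κ L η) (hL : 1 ≤ L)
    (hη : 0 ≤ η) (h : u ≤ v) (x : ι → ℝ) :
    ∑ J : Fin (n + 1) → ι, boxMajorant L η J u v x ≤
      (2 * κ * L) ^ n * (n + 1) ^ n * boxFlux L η u v x :=
  sum_prod_derivFactor_le (by linarith) (by nlinarith [hκ.one_le])
    (fun j => intervalProb_mixtureCDF_nonneg hL hη (h j) (x j))
    (fun j => by linarith [(one_add_intervalProb_mixtureCDF_half_mem_Icc (η := η) hL (u j) (v j)
      (x j)).2])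
    (fun j => intervalFlux_mixturePDF_nonneg hL _ _ _) fun j => hκ.intervalFlux_le _ _ _

theorem MixtureControl.abs_iteratedFDeriv_boxProb_le (hκ : MixtureControl n κ L η)
    (hL : 1 ≤ L) (h : u ≤ v) (J : Fin n → ι) {x y : ι → ℝ} (hxy : ‖y - x‖ ≤ η) :
    |iteratedFDeriv ℝ n (boxProb u v) y fun i => Pi.single (J i) 1| ≤
      (1 - Real.exp (-L ^ 2))⁻¹ ^ Fintype.card ι * κ ^ n * boxMajorant L η J u v x := by
  rw [iteratedFDeriv_boxProb_apply_single, Finset.abs_prod]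
  calc _ ≤ ∏ j, ((1 - Real.exp (-L ^ 2))⁻¹ * (κ ^ indexCount J j *
          derivFactor L (intervalProb (mixtureCDF L η) (u j) (v j) (x j))
            (intervalFlux (mixturePDF L η) (u j) (v j) (x j)) (indexCount J j))) :=
        Finset.prod_le_prod (fun _ _ => abs_nonneg _) fun j _ =>
          hκ.abs_iteratedDeriv_intervalProb_le hL (h j) ((norm_le_pi_norm (y - x) j).trans hxy)
            ((indexCount_le J j).trans_eq (Fintype.card_fin n))
    _ = _ := by
        rw [Finset.prod_mul_distrib, Finset.prod_mul_distrib, Finset.prod_pow_eq_pow_sum,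
          sum_indexCount, Finset.prod_const, Finset.card_univ, Fintype.card_fin, mul_assoc,
          boxMajorant]

theorem hasDerivAt_one_add_intervalProb_mixtureCDF_half (L η s u v x t : ℝ) :
    HasDerivAt (fun t => (1 + intervalProb (mixtureCDF L η) (u - t / s) (v + t / s) x) / 2)
      (intervalFlux (mixturePDF L η) (u - t / s) (v + t / s) x / (2 * s)) t := by
  have right : HasDerivAt (fun t => v + t / s - x) (1 / s) t :=
    (((hasDerivAt_id t).div_const s).const_add v).sub_const x
  have left : HasDerivAt (fun t => x - (u - t / s)) (1 / s) t := by
    simpa only [neg_neg] using (((hasDerivAt_id' t).div_const s).const_sub u).const_sub x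
  have prob := (((hasDerivAt_mixtureCDF L η _).comp t right).add
    ((hasDerivAt_mixtureCDF L η _).comp t left)).sub_const 1
  refine ((prob.const_add 1).div_const 2).congr_deriv ?_
  rw [intervalFlux, ← add_mul, div_mul_eq_div_div_swap, mul_one_div]

theorem hasDerivAt_prod_one_add_intervalProb_mixtureCDF_half {s : ℝ} (hs : s ≠ 0) (L η : ℝ)
    (u v x : ι → ℝ) (t : ℝ) :
    HasDerivAt (fun t => 2 * s * ∏ j,
        (1 + intervalProb (mixtureCDF L η) (u j - t / s) (v j + t / s) (x j)) / 2)
      (boxFlux L η (fun j => u j - t / s) (fun j => v j + t / s) x) t := by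
  refine ((HasDerivAt.fun_finsetProd fun j _ =>
    hasDerivAt_one_add_intervalProb_mixtureCDF_half L η s (u j) (v j) (x j) t).const_mul
      (2 * s)).congr_deriv ?_
  rw [boxFlux, Finset.mul_sum]
  refine Finset.sum_congr rfl fun i _ => ?_
  rw [smul_eq_mul, mul_left_comm, mul_div_cancel₀ _ (mul_ne_zero two_ne_zero hs), mul_comm]

theorem intervalIntegral_boxFlux_le {s : ℝ} (hL : 1 ≤ L) (hs : 0 < s) (u v x : ι → ℝ)
    (T : ℝ) :
    ∫ t in (0 : ℝ)..T, boxFlux L η (fun j => u j - t / s) (fun j => v j + t / s) x ≤ 2 * s := by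
  have factor_mem (j : ι) (t : ℝ) :
      (1 + intervalProb (mixtureCDF L η) (u j - t / s) (v j + t / s) (x j)) / 2 ∈ Set.Icc 0 1 :=
    one_add_intervalProb_mixtureCDF_half_mem_Icc hL _ _ _
  have continuous_flux : Continuous fun t =>
      boxFlux L η (fun j => u j - t / s) (fun j => v j + t / s) x :=
    (continuous_boxFlux L η).comp
      (f := fun t : ℝ => (fun j => u j - t / s, fun j => v j + t / s, x)) (by fun_prop)
  rw [intervalIntegral.integral_eq_sub_of_hasDerivAt
    (fun t _ => hasDerivAt_prod_one_add_intervalProb_mixtureCDF_half hs.ne' L η u v x t)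
    (continuous_flux.intervalIntegrable 0 T)]
  exact (sub_le_self _ (mul_nonneg (by positivity)
    (Finset.prod_nonneg fun j _ => (factor_mem j 0).1))).trans
    (mul_le_of_le_one_right (by positivity)
      (Finset.prod_le_one (fun j _ => (factor_mem j T).1) fun j _ => (factor_mem j T).2))

end BoxFlux

section Mixture

variable {ι Ω : Type*} [Fintype ι] [DecidableEq ι] [MeasurableSpace Ω] {μ : Measure Ω}
  [IsFiniteMeasure μ] {U V : Ω → ι → ℝ} {n : ℕ} {κ L η : ℝ}

theorem MixtureControl.integrable_boxFlux (hκ : MixtureControl n κ L η) (hL : 1 ≤ L)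
    (hU : Measurable U) (hV : Measurable V) (x : ι → ℝ) :
    Integrable (fun a => boxFlux L η (U a) (V a) x) μ := by
  have measurable_flux := (continuous_boxFlux L η).comp_aestronglyMeasurable
    (hU.prodMk (hV.prodMk (measurable_const (a := x)))).aestronglyMeasurable (μ := μ)
  refine .of_bound measurable_flux (Fintype.card ι * (2 * κ * L)) (.of_forall fun a => ?_)
  rw [Real.norm_of_nonneg (boxFlux_nonneg hL _ _ _)]
  exact hκ.boxFlux_le hL _ _ _

theorem MixtureControl.integrable_boxMajorant (hκ : MixtureControl (n + 1) κ L η)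
    (hL : 1 ≤ L) (hη : 0 ≤ η) (hU : Measurable U) (hV : Measurable V)
    (hUV : ∀ᵐ a ∂μ, U a ≤ V a) (J : Fin (n + 1) → ι) (x : ι → ℝ) :
    Integrable (fun a => boxMajorant L η J (U a) (V a) x) μ := by
  have measurable_majorant := (continuous_boxMajorant L η J).comp_aestronglyMeasurable
    (hU.prodMk (hV.prodMk (measurable_const (a := x)))).aestronglyMeasurable (μ := μ)
  refine ((hκ.integrable_boxFlux hL hU hV x).const_mul ((2 * κ * L) ^ n * (n + 1) ^ n)).mono'
    measurable_majorant ?_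
  filter_upwards [hUV] with a h
  rw [Real.norm_of_nonneg (boxMajorant_nonneg hL hη J h x)]
  exact (Finset.single_le_sum (f := fun J : Fin (n + 1) → ι => boxMajorant L η J (U a) (V a) x)
    (fun J _ => boxMajorant_nonneg hL hη J h x) (Finset.mem_univ J)).trans
    (hκ.sum_boxMajorant_le hL hη h x)

theorem MixtureControl.abs_iteratedFDeriv_meanBoxProb_le
    (hκ : MixtureControl (n + 1) κ L η) (hL : 1 ≤ L) (hU : Measurable U) (hV : Measurable V)
    (hUV : ∀ᵐ a ∂μ, U a ≤ V a) (J : Fin (n + 1) → ι) {x y : ι → ℝ} (hxy : ‖y - x‖ ≤ η) :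
    |iteratedFDeriv ℝ (n + 1) (meanBoxProb μ U V) y fun i => Pi.single (J i) 1| ≤
      (1 - Real.exp (-L ^ 2))⁻¹ ^ Fintype.card ι * κ ^ (n + 1) *
        ∫ a, boxMajorant L η J (U a) (V a) x ∂μ := by
  rw [iteratedFDeriv_meanBoxProb_apply hU hV, ← integral_const_mul, ← Real.norm_eq_abs]
  exact norm_integral_le_of_norm_le
    ((hκ.integrable_boxMajorant hL ((norm_nonneg _).trans hxy) hU hV hUV J x).const_mul _)
    (hUV.mono fun a h => hκ.abs_iteratedFDeriv_boxProb_le hL h J hxy)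

theorem MixtureControl.sum_integral_boxMajorant_le (hκ : MixtureControl (n + 1) κ L η)
    (hL : 1 ≤ L) (hη : 0 ≤ η) (hU : Measurable U) (hV : Measurable V)
    (hUV : ∀ᵐ a ∂μ, U a ≤ V a) (x : ι → ℝ) :
    ∑ J : Fin (n + 1) → ι, ∫ a, boxMajorant L η J (U a) (V a) x ∂μ ≤
      (2 * κ * L) ^ n * (n + 1) ^ n * ∫ a, boxFlux L η (U a) (V a) x ∂μ := by
  have integrable_majorant (J : Fin (n + 1) → ι) :=
    hκ.integrable_boxMajorant hL hη hU hV hUV J x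
  rw [← integral_finsetSum _ fun J _ => integrable_majorant J, ← integral_const_mul]
  exact integral_mono_ae (integrable_finsetSum _ fun J _ => integrable_majorant J)
    ((hκ.integrable_boxFlux hL hU hV x).const_mul _)
    (hUV.mono fun a h => hκ.sum_boxMajorant_le hL hη h x)

omit [IsFiniteMeasure μ] in
theorem MixtureControl.integral_prod_boxFlux_le (hκ : MixtureControl n κ L η) (hL : 1 ≤ L)
    [IsProbabilityMeasure μ] (hU : Measurable U) (hV : Measurable V) {s T : ℝ} (hs : 0 < s)
    (hT : 0 ≤ T) {I : Set ℝ} (hI : I ⊆ Set.Icc 0 T) (x : ι → ℝ) :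
    ∫ p, boxFlux L η (fun j => U p.1 j - p.2 / s) (fun j => V p.1 j + p.2 / s) x
      ∂(μ.prod (volume.restrict I)) ≤ 2 * s := by
  have : IsFiniteMeasure (volume.restrict I) :=
    isFiniteMeasure_restrict.2 (measure_ne_top_of_subset hI measure_Icc_lt_top.ne)
  have integrable_flux : Integrable (fun p : Ω × ℝ =>
      boxFlux L η (fun j => U p.1 j - p.2 / s) (fun j => V p.1 j + p.2 / s) x)
      (μ.prod (volume.restrict I)) :=
    hκ.integrable_boxFlux hL (by fun_prop) (by fun_prop) x
  have continuous_flux (a : Ω) : Continuous fun t =>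
      boxFlux L η (fun j => U a j - t / s) (fun j => V a j + t / s) x :=
    (continuous_boxFlux L η).comp
      (f := fun t : ℝ => (fun j => U a j - t / s, fun j => V a j + t / s, x)) (by fun_prop)
  have flux_le (a : Ω) :
      ∫ t in I, boxFlux L η (fun j => U a j - t / s) (fun j => V a j + t / s) x ≤ 2 * s :=
    calc _ ≤ ∫ t in Set.Icc 0 T,
          boxFlux L η (fun j => U a j - t / s) (fun j => V a j + t / s) x :=
        setIntegral_mono_set
          ((continuous_flux a).continuousOn.integrableOn_compact isCompact_Icc)
          (.of_forall fun t => boxFlux_nonneg hL _ _ _) (.of_forall hI)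
      _ = ∫ t in (0 : ℝ)..T, boxFlux L η (fun j => U a j - t / s) (fun j => V a j + t / s) x := by
        rw [integral_Icc_eq_integral_Ioc, intervalIntegral.integral_of_le hT]
      _ ≤ 2 * s := intervalIntegral_boxFlux_le hL hs _ _ _ _
  rw [integral_prod _ integrable_flux]
  calc _ ≤ ∫ _, 2 * s ∂μ :=
        integral_mono integrable_flux.integral_prod_left (integrable_const _) flux_le
    _ = 2 * s := by rw [integral_const, probReal_univ, one_smul]

end Mixture

section Smoothing

/-- The lower corner of `(∏ j, [a j - t, b j + t] - ε • x) / s`, where `p = (x, t)`. -/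
noncomputable def scaledLower {ι : Type*} (a : ι → ℝ) (ε s : ℝ) (p : (ι → ℝ) × ℝ) : ι → ℝ :=
  fun j => (a j - ε * p.1 j) / s - p.2 / s

/-- The upper corner of `(∏ j, [a j - t, b j + t] - ε • x) / s`, where `p = (x, t)`. -/
noncomputable def scaledUpper {ι : Type*} (b : ι → ℝ) (ε s : ℝ) (p : (ι → ℝ) × ℝ) : ι → ℝ :=
  fun j => (b j - ε * p.1 j) / s + p.2 / s

section Corners

variable {ι : Type*}

theorem measurable_scaledLower (a : ι → ℝ) (ε s : ℝ) : Measurable (scaledLower a ε s) := by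
  unfold scaledLower
  fun_prop

theorem measurable_scaledUpper (b : ι → ℝ) (ε s : ℝ) : Measurable (scaledUpper b ε s) := by
  unfold scaledUpper
  fun_prop

theorem scaledLower_le_scaledUpper {a b : ι → ℝ} {φ s : ℝ} (hs : 0 < s) (ε : ℝ)
    {p : (ι → ℝ) × ℝ} (hp : p.2 ∈ inflationLevels a b φ) :
    scaledLower a ε s p ≤ scaledUpper b ε s p := fun j => by
  rw [scaledLower, scaledUpper, ← sub_div, ← add_div]
  gcongr ?_ / s
  linarith [hp.2 j]

theorem add_smul_mem_Icc_iff (a b w : ι → ℝ) {ε σ : ℝ} (hs : 0 < ε * σ) (x z : ι → ℝ) (t : ℝ) :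
    w + ε • (x + σ • z) ∈ Set.Icc (fun j => a j - t) (fun j => b j + t) ↔
      (ε * σ)⁻¹ • w + z ∈
        Set.Icc (scaledLower a ε (ε * σ) (x, t)) (scaledUpper b ε (ε * σ) (x, t)) := by
  have rescale (j : ι) : ((ε * σ)⁻¹ • w + z) j =
      ((w + ε • (x + σ • z)) j - ε * x j) / (ε * σ) := by
    simp only [Pi.add_apply, Pi.smul_apply, smul_eq_mul]
    rw [eq_div_iff hs.ne', add_mul, mul_right_comm, inv_mul_cancel₀ hs.ne']
    ring
  simp only [Set.mem_Icc, Pi.le_def, rescale, scaledLower, scaledUpper, ← sub_div, ← add_div,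
    div_le_div_iff_of_pos_right hs]
  refine and_congr (forall_congr' fun j => ?_) (forall_congr' fun j => ?_) <;>
    constructor <;> intro h <;> linarith

end Corners

variable {d : ℕ} {ν γ : Measure (Fin d → ℝ)} [IsProbabilityMeasure ν] (a b : Fin d → ℝ)
  {φ ε σ : ℝ}

omit [IsProbabilityMeasure ν] in
theorem ae_scaledLower_le_scaledUpper (φ ε : ℝ) {s : ℝ} (hs : 0 < s) :
    ∀ᵐ p ∂(ν.prod (volume.restrict (inflationLevels a b φ))),
      scaledLower a ε s p ≤ scaledUpper b ε s p :=
  (Measure.quasiMeasurePreserving_snd.ae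
    (ae_restrict_mem (measurableSet_inflationLevels a b φ))).mono
    fun _ hp => scaledLower_le_scaledUpper hs ε hp

theorem rhoFn_eq_mul_meanBoxProb (hd : 0 < d) (hφ : 0 < φ) (hs : 0 < ε * σ)
    (hγ : γ = (ν.prod (Measure.pi fun _ => gaussianReal 0 1)).map fun p => p.1 + σ • p.2)
    (w : Fin d → ℝ) :
    rhoFn d a b φ ε γ w =
      φ * meanBoxProb (ν.prod (volume.restrict (inflationLevels a b φ)))
        (scaledLower a ε (ε * σ)) (scaledUpper b ε (ε * σ)) ((ε * σ)⁻¹ • w) := by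
  have : IsProbabilityMeasure γ := hγ ▸ Measure.isProbabilityMeasure_map (by fun_prop)
  have measurableSet_box (t : ℝ) : MeasurableSet {z : Fin d → ℝ |
      w + ε • z ∈ Set.Icc (fun j => a j - t) fun j => b j + t} :=
    measurableSet_Icc.preimage (by fun_prop : Measurable fun z : Fin d → ℝ => w + ε • z)
  have measurable_sum : Measurable fun p : (Fin d → ℝ) × (Fin d → ℝ) => p.1 + σ • p.2 := by
    fun_prop
  have slice (t : ℝ) (ht : t ∈ inflationLevels a b φ) :
      γ.real {z | w + ε • z ∈ Set.Icc (fun j => a j - t) fun j => b j + t} =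
        ∫ x, boxProb (scaledLower a ε (ε * σ) (x, t)) (scaledUpper b ε (ε * σ) (x, t))
          ((ε * σ)⁻¹ • w) ∂ν := by
    rw [hγ, map_measureReal_apply measurable_sum (measurableSet_box t),
      measureReal_prod_eq_integral _ _ (measurable_sum (measurableSet_box t))]
    refine integral_congr_ae (.of_forall fun x => ?_)
    dsimp only
    rw [← measureReal_add_mem_Icc_eq_boxProb (scaledLower_le_scaledUpper hs ε ht)]
    exact congrArg _ (Set.ext fun z => add_smul_mem_Icc_iff a b w hs x z t)
  rw [rhoFn_eq_mul_integral a b hd hφ, meanBoxProb, integral_prod_symm _ (integrable_boxProb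
      (measurable_scaledLower _ _ _) (measurable_scaledUpper _ _ _) _),
    setIntegral_congr_fun (measurableSet_inflationLevels a b φ) slice]

theorem iteratedFDeriv_rhoFn_apply (hd : 0 < d) (hφ : 0 < φ) (hs : 0 < ε * σ)
    (hγ : γ = (ν.prod (Measure.pi fun _ => gaussianReal 0 1)).map fun p => p.1 + σ • p.2)
    (n : ℕ) (w : Fin d → ℝ) (m : Fin n → Fin d → ℝ) :
    iteratedFDeriv ℝ n (rhoFn d a b φ ε γ) w m =
      φ * ((ε * σ)⁻¹ ^ n *
        iteratedFDeriv ℝ n (meanBoxProb (ν.prod (volume.restrict (inflationLevels a b φ)))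
          (scaledLower a ε (ε * σ)) (scaledUpper b ε (ε * σ))) ((ε * σ)⁻¹ • w) m) := by
  have smooth := (hasFTaylorSeriesUpTo_meanBoxProb (measurable_scaledLower a ε (ε * σ))
    (measurable_scaledUpper b ε (ε * σ)) n
    (μ := ν.prod (volume.restrict (inflationLevels a b φ)))).contDiff
  have scaled_smooth := smooth.comp (contDiff_const_smul (ε * σ)⁻¹)
  rw [funext (rhoFn_eq_mul_meanBoxProb a b hd hφ hs hγ)]
  refine (congrArg (· m) (iteratedFDeriv_const_smul_apply' (a := φ)
    scaled_smooth.contDiffAt)).trans ?_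
  exact congrArg (fun f => φ * f w m) (iteratedFDeriv_comp_const_smul (ε * σ)⁻¹ smooth)

variable {n : ℕ} {κ L η : ℝ}

theorem MixtureControl.iSup_abs_iteratedFDeriv_rhoFn_le
    (hκ : MixtureControl (n + 1) κ L η) (hL : 1 ≤ L) (hη : 0 ≤ η) (hd : 0 < d) (hφ : 0 < φ)
    (hs : 0 < ε * σ)
    (hγ : γ = (ν.prod (Measure.pi fun _ => gaussianReal 0 1)).map fun p => p.1 + σ • p.2)
    (w : Fin d → ℝ) (J : Fin (n + 1) → Fin d) :
    ⨆ y : {y : Fin d → ℝ // ‖y‖ ≤ ε * σ * η},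
        |iteratedFDeriv ℝ (n + 1) (rhoFn d a b φ ε γ) (w + y.1) fun i => Pi.single (J i) 1| ≤
      φ * ((ε * σ)⁻¹ ^ (n + 1) * ((1 - Real.exp (-L ^ 2))⁻¹ ^ d * κ ^ (n + 1) *
        ∫ p, boxMajorant L η J (scaledLower a ε (ε * σ) p) (scaledUpper b ε (ε * σ) p)
          ((ε * σ)⁻¹ • w) ∂(ν.prod (volume.restrict (inflationLevels a b φ))))) := by
  have corners_le := ae_scaledLower_le_scaledUpper (ν := ν) a b φ ε hs
  have κ_nonneg : 0 ≤ κ := zero_le_one.trans hκ.one_le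
  have inv_nonneg : 0 ≤ (1 - Real.exp (-L ^ 2))⁻¹ :=
    inv_nonneg.2 (by linarith [exp_neg_sq_le_half hL])
  have majorant_nonneg := integral_nonneg_of_ae
    (corners_le.mono fun p h => boxMajorant_nonneg hL hη J h ((ε * σ)⁻¹ • w))
  refine Real.iSup_le (fun y => ?_) (by positivity)
  have near : ‖(ε * σ)⁻¹ • (w + y.1) - (ε * σ)⁻¹ • w‖ ≤ η := by
    rw [← smul_sub, add_sub_cancel_left, norm_smul, Real.norm_of_nonneg (by positivity)]
    exact (inv_mul_le_iff₀ hs).2 y.2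
  have deriv_le := hκ.abs_iteratedFDeriv_meanBoxProb_le hL (measurable_scaledLower _ _ _)
    (measurable_scaledUpper _ _ _) corners_le J near
  rw [Fintype.card_fin] at deriv_le
  rw [iteratedFDeriv_rhoFn_apply a b hd hφ hs hγ, abs_mul, abs_mul, abs_of_pos hφ,
    abs_of_pos (pow_pos (inv_pos.2 hs) _)]
  exact mul_le_mul_of_nonneg_left
    (mul_le_mul_of_nonneg_left deriv_le (pow_nonneg (inv_pos.2 hs).le _)) hφ.le

theorem MixtureControl.sum_iSup_abs_iteratedFDeriv_rhoFn_le
    (hκ : MixtureControl (n + 1) κ L η) (hL : 1 ≤ L) (hη : 0 ≤ η) (hd : 0 < d) (hφ : 0 < φ)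
    (hs : 0 < ε * σ)
    (hγ : γ = (ν.prod (Measure.pi fun _ => gaussianReal 0 1)).map fun p => p.1 + σ • p.2)
    (w : Fin d → ℝ) :
    ∑ J : Fin (n + 1) → Fin d, ⨆ y : {y : Fin d → ℝ // ‖y‖ ≤ ε * σ * η},
        |iteratedFDeriv ℝ (n + 1) (rhoFn d a b φ ε γ) (w + y.1) fun i => Pi.single (J i) 1| ≤
      φ * ((ε * σ)⁻¹ ^ (n + 1) * ((1 - Real.exp (-L ^ 2))⁻¹ ^ d * κ ^ (n + 1) *
        ((2 * κ * L) ^ n * (n + 1) ^ n * (2 * (ε * σ))))) := by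
  have κ_nonneg : 0 ≤ κ := zero_le_one.trans hκ.one_le
  have inv_nonneg : 0 ≤ (1 - Real.exp (-L ^ 2))⁻¹ :=
    inv_nonneg.2 (by linarith [exp_neg_sq_le_half hL])
  have corners_le := ae_scaledLower_le_scaledUpper (ν := ν) a b φ ε hs
  have sum_majorant_le := hκ.sum_integral_boxMajorant_le hL hη (measurable_scaledLower _ _ _)
    (measurable_scaledUpper _ _ _) corners_le ((ε * σ)⁻¹ • w)
  have flux_le := hκ.integral_prod_boxFlux_le (μ := ν) hL
    (U := fun x j => (a j - ε * x j) / (ε * σ)) (V := fun x j => (b j - ε * x j) / (ε * σ))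
    (by fun_prop) (by fun_prop) hs (one_div_pos.2 hφ).le
    (fun t (ht : t ∈ inflationLevels a b φ) => ht.1) ((ε * σ)⁻¹ • w)
  refine (Finset.sum_le_sum fun J _ =>
    hκ.iSup_abs_iteratedFDeriv_rhoFn_le a b hL hη hd hφ hs hγ w J).trans ?_
  simp only [← Finset.mul_sum]
  gcongr
  refine sum_majorant_le.trans ?_
  gcongr
  exact flux_le

end Smoothing

section LogDimension

theorem one_le_sqrt_log {d : ℕ} (hd : 3 ≤ d) : 1 ≤ √(Real.log d) := by
  have three_le : (3 : ℝ) ≤ d := by exact_mod_cast hd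
  refine Real.one_le_sqrt.2 ((Real.le_log_iff_exp_le (by linarith)).2 ?_)
  linarith [Real.exp_one_lt_d9]

theorem inv_one_sub_exp_neg_log_pow_le {d : ℕ} (hd : 2 ≤ d) :
    (1 - Real.exp (-√(Real.log d) ^ 2))⁻¹ ^ d ≤ Real.exp 2 := by
  have two_le : (2 : ℝ) ≤ d := by exact_mod_cast hd
  have pred_pos : 0 < (d : ℝ) - 1 := by linarith
  rw [Real.sq_sqrt (Real.log_nonneg (by linarith)), Real.exp_neg, Real.exp_log (by linarith)]
  calc
    (1 - (d : ℝ)⁻¹)⁻¹ ^ d = (1 / (d - 1) + 1) ^ d := by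
      congr 1
      field_simp
      ring
    _ ≤ Real.exp (1 / (d - 1)) ^ d :=
      pow_le_pow_left₀ (by positivity) (Real.add_one_le_exp _) d
    _ = Real.exp (d * (1 / (d - 1))) := (Real.exp_nat_mul _ _).symm
    _ ≤ Real.exp 2 := by
      rw [Real.exp_le_exp, mul_one_div, div_le_iff₀ pred_pos]
      linarith

theorem sqrt_pow_eq_rpow_half {x : ℝ} (hx : 0 ≤ x) (n : ℕ) : √x ^ n = x ^ ((n : ℝ) / 2) := by
  rw [Real.sqrt_eq_rpow, ← Real.rpow_mul_natCast hx, one_div_mul_eq_div]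

end LogDimension

theorem mul_sum_sq_le_of_forall_sum_sq_eq_one {ι : Type*} [Fintype ι] {S : ι → ι → ℝ} {c : ℝ}
    (h : ∀ x : ι → ℝ, ∑ j, x j ^ 2 = 1 → c ≤ ∑ j, ∑ k, x j * S j k * x k) (x : ι → ℝ) :
    c * ∑ j, x j ^ 2 ≤ ∑ j, ∑ k, x j * S j k * x k := by
  rcases (Finset.sum_nonneg fun j _ => sq_nonneg (x j)).eq_or_lt with norm_zero | norm_pos
  · have coord_zero (j : ι) : x j = 0 := pow_eq_zero_iff two_ne_zero |>.1 <|
      (Finset.sum_eq_zero_iff_of_nonneg fun j _ => sq_nonneg (x j)).1 norm_zero.symm j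
        (Finset.mem_univ j)
    simp [coord_zero]
  · have unit : ∑ j, (x j / √(∑ j, x j ^ 2)) ^ 2 = 1 := by
      simp_rw [div_pow, Real.sq_sqrt norm_pos.le]
      rw [← Finset.sum_div, div_self norm_pos.ne']
    have quadratic_le := h _ unit
    have term (j k : ι) : x j / √(∑ j, x j ^ 2) * S j k * (x k / √(∑ j, x j ^ 2)) =
        x j * S j k * x k / ∑ j, x j ^ 2 := by
      rw [div_mul_eq_mul_div, div_mul_div_comm, Real.mul_self_sqrt norm_pos.le]
    simp only [term, ← Finset.sum_div] at quadratic_le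
    exact (le_div_iff₀ norm_pos).1 quadratic_le

theorem stmt14_general (v : ℕ) (hv : 1 ≤ v) (K : ℝ) (hK : 0 ≤ K) :
    ∃ C : ℝ, ∀ d : ℕ, 3 ≤ d → ∀ S : Fin d → Fin d → ℝ, ∀ σ : ℝ, 0 < σ →
      (∀ x : Fin d → ℝ, σ ^ 2 * ∑ j, x j ^ 2 ≤ ∑ j, ∑ k, x j * S j k * x k) →
      ∀ γ : Measure (Fin d → ℝ),
      (∀ l : (Fin d → ℝ) →ₗ[ℝ] ℝ, ∃ vr : NNReal, γ.map l = gaussianReal 0 vr) →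
      (∀ j k, ∫ z, z j * z k ∂γ = S j k) →
      ∀ φ : ℝ, 0 < φ → ∀ ε : ℝ, 0 < ε → ∀ a b w : Fin d → ℝ,
        ∑ J : Fin v → Fin d,
          (⨆ y : {y : Fin d → ℝ // ‖y‖ ≤ ε * σ * (K / √(Real.log d))},
            |iteratedFDeriv ℝ v (rhoFn d a b φ ε γ) (w + y.1) fun i => Pi.single (J i) 1|)
          ≤ C * φ * Real.log d ^ (((v : ℝ) - 1) / 2) / (ε * σ) ^ (v - 1) := by
  obtain ⟨n, rfl⟩ := Nat.exists_eq_add_of_le' hv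
  obtain ⟨κ, hκ⟩ := exists_mixtureControl (n + 1) K
  refine ⟨Real.exp 2 * κ ^ (n + 1) * (2 * κ) ^ n * (n + 1) ^ n * 2,
    fun d hd S σ hσ hS γ hγ hγS φ hφ ε hε a b w => ?_⟩
  have hL := one_le_sqrt_log hd
  have L_pos := zero_lt_one.trans_le hL
  have hη : 0 ≤ K / √(Real.log d) := by positivity
  have control := hκ hL hη (mul_div_cancel₀ K L_pos.ne').le
  have κ_nonneg : 0 ≤ κ := zero_le_one.trans control.one_le
  have symm_S : Matrix.IsSymm S := Matrix.IsSymm.ext fun j k => by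
    simp only [← hγS, mul_comm]
  obtain ⟨ν, _, γ_eq⟩ := exists_eq_map_prod_pi_gaussianReal hγ hγS
    (posSemidef_sub_smul_one symm_S hS)
  have exponent : Real.log d ^ ((((n + 1 : ℕ) : ℝ) - 1) / 2) = √(Real.log d) ^ n := by
    rw [sqrt_pow_eq_rpow_half (Real.sqrt_pos.1 L_pos).le, Nat.cast_add_one, add_sub_cancel_right]
  refine (control.sum_iSup_abs_iteratedFDeriv_rhoFn_le a b hL hη (by omega) hφ
    (mul_pos hε hσ) γ_eq w).trans ?_
  rw [exponent, Nat.add_sub_cancel]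
  calc
    _ ≤ φ * ((ε * σ)⁻¹ ^ (n + 1) * (Real.exp 2 * κ ^ (n + 1) *
        ((2 * κ * √(Real.log d)) ^ n * (n + 1) ^ n * (2 * (ε * σ))))) := by
      gcongr
      exact inv_one_sub_exp_neg_log_pow_le (by omega)
    _ = _ := by
      rw [mul_pow (2 * κ), inv_pow, pow_succ (ε * σ)]
      field_simp

/-- mixed smoothing inequality.  For every v ≥ 1 and K > 0 there is a
constant C = C(v,K) such that for all d ≥ 3, all Σ positive definite with unit diagonal
and smallest eigenvalue σ_*², all φ > 0, ε ∈ (0,1], all rectangles A and all w,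
Σ_{j_1…j_v} sup_{‖y‖_∞ ≤ εσ_*η} |∂_{j_1…j_v} ρ^{A,φ,ε,Σ}(w+y)|
  ≤ C φ (log d)^{(v−1)/2}/(εσ_*)^{v−1}, where η = K/√(log d). -/
theorem stmt14 (v : ℕ) (hv : 1 ≤ v) (K : ℝ) (hK : 0 < K) :
    ∃ C : ℝ, ∀ d : ℕ, 3 ≤ d →
      ∀ (S : Fin d → Fin d → ℝ), (∀ j, S j j = 1) →
      ∀ σs : ℝ, 0 < σs →
      IsGLB {r : ℝ | ∃ x : Fin d → ℝ, (∑ j, (x j) ^ 2) = 1 ∧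
        r = ∑ j, ∑ k, x j * S j k * x k} (σs ^ 2) →
      ∀ γ : Measure (Fin d → ℝ), IsProbabilityMeasure γ →
      (∀ l : (Fin d → ℝ) →ₗ[ℝ] ℝ, ∃ vr : NNReal, γ.map l = gaussianReal 0 vr) →
      (∀ j k, ∫ z, z j * z k ∂γ = S j k) →
      ∀ φ : ℝ, 0 < φ → ∀ ε : ℝ, 0 < ε → ε ≤ 1 →
      ∀ a b : Fin d → ℝ, ∀ w : Fin d → ℝ,
        ∑ J : Fin v → Fin d,
          (⨆ y : {y : Fin d → ℝ // ‖y‖ ≤ ε * σs * (K / Real.sqrt (Real.log d))},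
            |iteratedFDeriv ℝ v (rhoFn d a b φ ε γ) (w + y.1)
              (fun i => Pi.single (J i) 1)|)
          ≤ C * φ * Real.log d ^ (((v : ℝ) - 1) / 2) / (ε * σs) ^ (v - 1) := by
  obtain ⟨C, hC⟩ := stmt14_general v hv K hK.le
  exact ⟨C, fun d hd S _ σs hσs hS γ _ hγ hγS φ hφ ε hε _ a b w => hC d hd S σs hσs
    (mul_sum_sq_le_of_forall_sum_sq_eq_one fun x hx => hS.1 ⟨x, hx, rfl⟩) γ hγ hγS φ hφ ε hε a b w⟩
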